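/- arXiv:2407.20614 — 5 statements merged into one kernel-verified Lean document; each statement's English description precedes it below -/
import Mathlib

section
/- Let V be an n-dimensional vector space over the finite field 𝔽_q with n ≥ 2t+1 and t ≥ 1, and let F be a cover-free family of 2t-dimensional subspaces of V. Then for every F ∈ F, |M_t(F)| ≥ q^t [2t-1 choose t]_q and |N_t(F)| ≤ [2t-1 choose t-1]_q; moreover, equality holds (in both) if and only if N_t(F) is an intersecting family of size [2t-1 choose t-1]_q. -/
/-- A family of subspaces is cover-free if there are no three distinct members
`F₀, F₁, F₂` with `F₀ ≤ (F₀ ⊓ F₁) ⊔ (F₀ ⊓ F₂)`. -/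
def IsCoverFree {K V : Type*} [Field K] [AddCommGroup V] [Module K V]
    (F : Set (Submodule K V)) : Prop :=
  ¬ ∃ F₀ F₁ F₂ : Submodule K V, F₀ ∈ F ∧ F₁ ∈ F ∧ F₂ ∈ F ∧
    F₀ ≠ F₁ ∧ F₀ ≠ F₂ ∧ F₁ ≠ F₂ ∧ F₀ ≤ (F₀ ⊓ F₁) ⊔ (F₀ ⊓ F₂)

/-- The Gaussian binomial coefficient `[m choose k]_q` as a rational number. -/
def GaussQ (q m k : ℕ) : ℚ :=
  ∏ i ∈ Finset.range k, ((q : ℚ) ^ (m - i) - 1) / ((q : ℚ) ^ (k - i) - 1)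

/-- `M_t(F₀)`: the `t`-dimensional subspaces of `F₀` that are private, i.e. lie in
exactly one member of the family. -/
def Mset {K V : Type*} [Field K] [AddCommGroup V] [Module K V]
    (F : Set (Submodule K V)) (t : ℕ) (F₀ : Submodule K V) : Set (Submodule K V) :=
  {T | T ≤ F₀ ∧ Module.finrank K T = t ∧ {G ∈ F | T ≤ G}.ncard = 1}

/-- `N_t(F₀)`: the `t`-dimensional subspaces of `F₀` lying in more than one member
of the family. -/
def Nset {K V : Type*} [Field K] [AddCommGroup V] [Module K V]
    (F : Set (Submodule K V)) (t : ℕ) (F₀ : Submodule K V) : Set (Submodule K V) :=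
  {T | T ≤ F₀ ∧ Module.finrank K T = t ∧ 1 < {G ∈ F | T ≤ G}.ncard}

/-- A linearly independent `k`-tuple in a `k`-dimensional subspace `T` spans `T`. -/
theorem aux_span_eq {K W : Type*} [Field K] [AddCommGroup W] [Module K W]
    [FiniteDimensional K W] {k : ℕ} (T : Submodule K W) (hT : Module.finrank K T = k)
    (s : Fin k → T) (hs : LinearIndependent K s) :
    Submodule.span K (Set.range (fun i => (s i : W))) = T := by
  apply Submodule.eq_of_le_of_finrank_eq
  · rw [Submodule.span_le]
    rintro _ ⟨i, rfl⟩
    exact (s i).2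
  · have h2 : LinearIndependent K (fun i => (s i : W)) :=
      hs.map' T.subtype (Submodule.ker_subtype T)
    rw [finrank_span_eq_card h2, hT, Fintype.card_fin]

/-- Counting `k`-dimensional subspaces by linearly independent tuples. -/
theorem aux_count {K W : Type*} [Field K] [Fintype K] [AddCommGroup W] [Module K W]
    [FiniteDimensional K W] {k : ℕ} (hk : k ≤ Module.finrank K W) :
    {T : Submodule K W | Module.finrank K T = k}.ncard *
      ∏ i : Fin k, (Fintype.card K ^ k - Fintype.card K ^ i.val) =
    ∏ i : Fin k, (Fintype.card K ^ Module.finrank K W - Fintype.card K ^ i.val) := by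
  classical
  have : Finite W := Module.finite_of_finite K
  have : Finite (Submodule K W) := Finite.of_injective (fun S => (S : Set W)) SetLike.coe_injective
  let X := {T : Submodule K W // Module.finrank K T = k}
  let Y := {s : Fin k → W // LinearIndependent K s}
  let f : (Σ T : X, {s : Fin k → T.1 // LinearIndependent K s}) → Y :=
    fun p => ⟨fun i => (p.2.1 i : W), p.2.2.map' p.1.1.subtype (Submodule.ker_subtype _)⟩
  have hf : Function.Bijective f := by
    constructor
    · rintro ⟨⟨T, hT⟩, s, hs⟩ ⟨⟨T', hT'⟩, s', hs'⟩ h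
      have h1 : (fun i => (s i : W)) = fun i => (s' i : W) := congrArg Subtype.val h
      have e1 := aux_span_eq T hT s hs
      have e2 := aux_span_eq T' hT' s' hs'
      have e3 : T = T' := by rw [← e1, ← e2, h1]
      subst e3
      have : s = s' := by
        funext i
        exact Subtype.ext (congrFun h1 i)
      subst this
      rfl
    · rintro ⟨s, hs⟩
      refine ⟨⟨⟨Submodule.span K (Set.range s), ?_⟩,
        fun i => ⟨s i, Submodule.subset_span ⟨i, rfl⟩⟩, ?_⟩, rfl⟩
      · rw [finrank_span_eq_card hs, Fintype.card_fin]
      · exact LinearIndependent.of_comp (Submodule.span K (Set.range s)).subtype hs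
  have h1 := Nat.card_congr (Equiv.ofBijective f hf)
  have : Fintype X := Fintype.ofFinite X
  rw [Nat.card_sigma, card_linearIndependent hk] at h1
  rw [← h1]
  have : ∀ T : X, Nat.card {s : Fin k → T.1 // LinearIndependent K s} =
      ∏ i : Fin k, (Fintype.card K ^ k - Fintype.card K ^ i.val) := by
    intro T
    rw [card_linearIndependent T.2.ge, T.2]
  rw [Finset.sum_congr rfl (fun T _ => this T), Finset.sum_const, smul_eq_mul,
    Finset.card_univ]
  congr 1
  rw [← Nat.card_eq_fintype_card]
  rfl

theorem aux_countQ {K W : Type*} [Field K] [Fintype K] [AddCommGroup W] [Module K W]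
    [FiniteDimensional K W] {k : ℕ} (hk : k ≤ Module.finrank K W) :
    ({T : Submodule K W | Module.finrank K T = k}.ncard : ℚ) =
      GaussQ (Fintype.card K) (Module.finrank K W) k := by
  have h := aux_count (K := K) (W := W) hk
  set q := Fintype.card K with hq
  set m := Module.finrank K W with hm
  have hq1 : 1 < q := Fintype.one_lt_card
  have hq1' : (1 : ℚ) < q := by exact_mod_cast hq1
  have cast : ∀ a, k ≤ a → ((∏ i : Fin k, (q ^ a - q ^ i.val) : ℕ) : ℚ) =
      ∏ i ∈ Finset.range k, ((q : ℚ) ^ i * ((q : ℚ) ^ (a - i) - 1)) := by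
    intro a ha
    rw [Finset.prod_range, Nat.cast_prod]
    refine Finset.prod_congr rfl fun i _ => ?_
    have := i.2
    rw [Nat.cast_sub (Nat.pow_le_pow_right hq1.le (by omega))]
    push_cast
    rw [mul_sub, ← pow_add, mul_one, Nat.add_sub_cancel' (by omega)]
  have h' := congrArg (fun x : ℕ => (x : ℚ)) h
  simp only [Nat.cast_mul] at h'
  rw [cast k le_rfl, cast m hk] at h'
  unfold GaussQ
  have hne : ∀ i ∈ Finset.range k, ((q : ℚ) ^ i * ((q : ℚ) ^ (k - i) - 1)) ≠ 0 := by
    intro i hi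
    have := Finset.mem_range.1 hi
    have h3 : (1 : ℚ) < (q : ℚ) ^ (k - i) := one_lt_pow₀ hq1' (by omega)
    have h4 : (0 : ℚ) < (q : ℚ) ^ i := by positivity
    exact mul_ne_zero h4.ne' (by linarith)
  rw [← eq_div_iff (Finset.prod_ne_zero_iff.2 hne), ← Finset.prod_div_distrib] at h'
  rw [h']
  refine Finset.prod_congr rfl fun i hi => ?_
  have h4 : (q : ℚ) ^ i ≠ 0 := by positivity
  rw [mul_div_mul_left _ _ h4]

theorem aux_gauss1 {q : ℕ} (hq : 1 < q) (s : ℕ) :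
    GaussQ q (2 * (s + 1)) (s + 1) = ((q : ℚ) ^ (s + 1) + 1) * GaussQ q (2 * (s + 1) - 1) s := by
  have hq1' : (1 : ℚ) < q := by exact_mod_cast hq
  have h3 : (1 : ℚ) < (q : ℚ) ^ (s + 1) := one_lt_pow₀ hq1' (by omega)
  unfold GaussQ
  rw [Finset.prod_range_succ', mul_comm]
  congr 1
  · simp only [Nat.sub_zero]
    rw [div_eq_iff (by linarith)]
    ring
  · refine Finset.prod_congr rfl fun i _ => ?_
    rw [show 2 * (s + 1) - (i + 1) = 2 * (s + 1) - 1 - i by omega,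
      show s + 1 - (i + 1) = s - i by omega]

theorem aux_gauss2 {q : ℕ} (hq : 1 < q) (s : ℕ) :
    GaussQ q (2 * (s + 1) - 1) (s + 1) = GaussQ q (2 * (s + 1) - 1) s := by
  have hq1' : (1 : ℚ) < q := by exact_mod_cast hq
  have h3 : (1 : ℚ) < (q : ℚ) ^ (s + 1) := one_lt_pow₀ hq1' (by omega)
  unfold GaussQ
  rw [Finset.prod_div_distrib, Finset.prod_div_distrib, Finset.prod_range_succ,
    Finset.prod_range_succ' (fun i => ((q : ℚ) ^ (s + 1 - i) - 1))]
  rw [show 2 * (s + 1) - 1 - s = s + 1 by omega, Nat.sub_zero]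
  rw [mul_div_mul_right _ _ (by linarith)]
  congr 1
  refine Finset.prod_congr rfl fun i _ => ?_
  rw [show s + 1 - (i + 1) = s - i by omega]

/-- The general linear group is transitive on subspaces of a given dimension. -/
theorem aux_trans {K W : Type*} [Field K] [AddCommGroup W] [Module K W]
    [FiniteDimensional K W] (A B : Submodule K W)
    (h : Module.finrank K A = Module.finrank K B) :
    ∃ g : W ≃ₗ[K] W, A.map (g : W →ₗ[K] W) = B := by
  obtain ⟨A', hA⟩ := A.exists_isCompl
  obtain ⟨B', hB⟩ := B.exists_isCompl
  have h' : Module.finrank K A' = Module.finrank K B' := by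
    have h1 := Submodule.finrank_add_eq_of_isCompl hA
    have h2 := Submodule.finrank_add_eq_of_isCompl hB
    omega
  let e := LinearEquiv.ofFinrankEq A B h
  let e' := LinearEquiv.ofFinrankEq A' B' h'
  let g : W ≃ₗ[K] W := (Submodule.prodEquivOfIsCompl A A' hA).symm.trans
    ((e.prodCongr e').trans (Submodule.prodEquivOfIsCompl B B' hB))
  refine ⟨g, ?_⟩
  apply Submodule.eq_of_le_of_finrank_eq
  · rintro _ ⟨x, hx, rfl⟩
    have := Submodule.prodEquivOfIsCompl_symm_apply_left A A' hA ⟨x, hx⟩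
    simp only at this
    simp [g, this]
  · rw [← h]
    exact LinearEquiv.finrank_map_eq g A

/-- Existence of a `t`-spread in a `2t`-dimensional space. -/
theorem aux_spread {K W : Type*} [Field K] [Fintype K] [AddCommGroup W] [Module K W]
    [FiniteDimensional K W] {t : ℕ} (ht : 1 ≤ t) (hW : Module.finrank K W = 2 * t) :
    ∃ (ι : Type) (_ : Fintype ι) (L : ι → Submodule K W),
      Fintype.card ι = Fintype.card K ^ t + 1 ∧ (∀ i, Module.finrank K (L i) = t) ∧
      ∀ i j, i ≠ j → L i ⊓ L j = ⊥ := by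
  classical
  obtain ⟨p, hp⟩ := CharP.exists K
  have : Fact p.Prime := ⟨CharP.char_is_prime K p⟩
  have : NeZero t := ⟨by omega⟩
  let E := FiniteField.Extension K p t
  have hE : Module.finrank K E = t := FiniteField.finrank_extension K p t
  have : Fintype E := Fintype.ofFinite E
  have hEc : Fintype.card E = Fintype.card K ^ t := by
    have := FiniteField.natCard_extension K p t
    rwa [Nat.card_eq_fintype_card, Nat.card_eq_fintype_card] at this
  have hEE : Module.finrank K (E × E) = Module.finrank K W := by
    rw [Module.finrank_prod, hE, hW]; omega
  let φ : (E × E) ≃ₗ[K] W := LinearEquiv.ofFinrankEq _ _ hEE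
  let L0 : Option E → (E →ₗ[K] E × E) := fun o => match o with
    | none => LinearMap.inr K E E
    | some a => LinearMap.prod LinearMap.id (LinearMap.mulLeft K a)
  have hinj : ∀ o, Function.Injective (L0 o) := by
    rintro (_ | a) x y hxy
    · exact congrArg Prod.snd hxy
    · exact congrArg Prod.fst hxy
  have hdis : ∀ i j x y, i ≠ j → L0 i x = L0 j y → x = 0 := by
    rintro (_ | a) (_ | b) x y hij hxy
    · exact absurd rfl hij
    · have h1 := congrArg Prod.fst hxy
      have h2 := congrArg Prod.snd hxy
      simp [L0] at h1 h2
      rw [h2, ← h1, mul_zero]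
    · have h1 := congrArg Prod.fst hxy
      simpa [L0] using h1
    · have h1 := congrArg Prod.fst hxy
      have h2 := congrArg Prod.snd hxy
      simp [L0] at h1 h2
      rw [← h1] at h2
      rcases mul_eq_mul_right_iff.1 h2 with h2 | h2
      · exact absurd (congrArg some h2) hij
      · exact h2
  refine ⟨Option E, inferInstance, fun o => LinearMap.range ((φ : (E × E) →ₗ[K] W).comp (L0 o)),
    ?_, ?_, ?_⟩
  · rw [Fintype.card_option, hEc]
  · intro o
    rw [LinearMap.finrank_range_of_inj, hE]
    exact φ.injective.comp (hinj o)
  · intro i j hij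
    rw [eq_bot_iff]
    rintro _ ⟨⟨x, rfl⟩, ⟨y, hy⟩⟩
    have h1 : L0 j y = L0 i x := φ.injective hy
    have h2 := hdis i j x y hij h1.symm
    simp [h2]

/-- Erdős–Ko–Rado for `t`-subspaces of a `2t`-space. -/
theorem aux_ekr {K W : Type*} [Field K] [Fintype K] [AddCommGroup W] [Module K W]
    [FiniteDimensional K W] {t : ℕ} (ht : 1 ≤ t) (hW : Module.finrank K W = 2 * t)
    (N : Set (Submodule K W)) (hN : ∀ T ∈ N, Module.finrank K T = t)
    (hint : ∀ A ∈ N, ∀ B ∈ N, A ⊓ B ≠ ⊥) :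
    N.ncard * (Fintype.card K ^ t + 1) ≤
      {T : Submodule K W | Module.finrank K T = t}.ncard := by
  classical
  have : Finite W := Module.finite_of_finite K
  have : Finite (Submodule K W) := Finite.of_injective (fun S => (S : Set W)) SetLike.coe_injective
  have : Finite (W ≃ₗ[K] W) := Finite.of_injective (fun g => (g : W → W)) DFunLike.coe_injective
  have : Fintype (W ≃ₗ[K] W) := Fintype.ofFinite _
  have : Fintype (Submodule K W) := Fintype.ofFinite _
  obtain ⟨ι, _, L, hι, hL, hLL⟩ := aux_spread (K := K) (W := W) ht hW
  let S : Finset (Submodule K W) := Finset.univ.filter fun T => Module.finrank K T = t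
  let N' : Finset (Submodule K W) := Finset.univ.filter fun T => T ∈ N
  have hS : {T : Submodule K W | Module.finrank K T = t}.ncard = S.card := by
    rw [← Set.ncard_coe_finset]; congr 1; ext T; simp [S]
  have hN' : N.ncard = N'.card := by
    rw [← Set.ncard_coe_finset]; congr 1; ext T; simp [N']
  rw [hS, hN', ← hι]
  let act : (W ≃ₗ[K] W) → Submodule K W → Submodule K W := fun g A => A.map (g : W →ₗ[K] W)
  let c : Submodule K W → Submodule K W → ℕ := fun A B =>
    (Finset.univ.filter fun g => act g A = B).card
  let G := Fintype.card (W ≃ₗ[K] W)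
  have hG : 0 < G := Fintype.card_pos
  have hle : ∀ A B B' : Submodule K W, Module.finrank K B = Module.finrank K B' →
      c A B ≤ c A B' := by
    intro A B B' h
    obtain ⟨k, hk⟩ := aux_trans B B' h
    apply Finset.card_le_card_of_injOn (fun g => g.trans k)
    · intro g hg
      have hg' : act g A = B := by simpa using hg
      have : act (g.trans k) A = B' := by
        rw [← hk, ← hg']
        simp only [act, LinearEquiv.coe_trans, Submodule.map_comp]
      simpa using this
    · intro g _ g' _ h
      ext x
      exact k.injective (LinearEquiv.congr_fun h x)
  have hsum : ∀ A : Submodule K W, Module.finrank K A = t → ∑ B ∈ S, c A B = G := by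
    intro A hA
    have := Finset.card_eq_sum_card_fiberwise (s := (Finset.univ : Finset (W ≃ₗ[K] W)))
      (t := S) (f := fun g => act g A) (by
        intro g _
        simp only [S, Finset.coe_filter, Finset.mem_univ, true_and, Set.mem_ofPred_eq, act]
        rw [← hA]
        exact LinearEquiv.finrank_map_eq g A)
    exact this.symm
  have hc : ∀ A : Submodule K W, Module.finrank K A = t → ∀ B ∈ N', S.card * c A B = G := by
    intro A hA B hB
    have hB' : Module.finrank K B = t := hN B (by simpa [N'] using hB)
    rw [← hsum A hA, ← smul_eq_mul, ← Finset.sum_const]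
    refine Finset.sum_congr rfl fun B' hB'' => ?_
    have h2 : Module.finrank K B' = t := by simpa [S] using hB''
    exact le_antisymm (hle _ _ _ (hB'.trans h2.symm)) (hle _ _ _ (h2.trans hB'.symm))
  have hone : ∑ i, ∑ B ∈ N', c (L i) B ≤ G := by
    have h1 : ∀ i, ∑ B ∈ N', c (L i) B =
        (Finset.univ.filter fun g => act g (L i) ∈ N').card := by
      intro i
      rw [Finset.card_eq_sum_card_fiberwise (t := N') (f := fun g => act g (L i))
        (by intro g hg; simpa using hg)]
      refine Finset.sum_congr rfl fun B hB => ?_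
      apply congrArg Finset.card
      ext g
      simp only [Finset.mem_filter, Finset.mem_univ, true_and]
      exact ⟨fun h => ⟨h ▸ hB, h⟩, fun h => h.2⟩
    simp_rw [h1]
    rw [← Finset.card_biUnion]
    · exact Finset.card_le_univ _
    · intro i _ j _ hij
      rw [Function.onFun, Finset.disjoint_left]
      intro g hg hg'
      have a1 : act g (L i) ∈ N := by simpa [N'] using hg
      have a2 : act g (L j) ∈ N := by simpa [N'] using hg'
      apply hint _ a1 _ a2
      simp only [act]
      rw [← Submodule.map_inf _ g.injective, hLL i j hij, Submodule.map_bot]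
  have h3 : S.card * ∑ i, ∑ B ∈ N', c (L i) B = (N'.card * Fintype.card ι) * G := by
    rw [Finset.mul_sum]
    have : ∀ i ∈ Finset.univ, S.card * ∑ B ∈ N', c (L i) B = N'.card * G := by
      intro i _
      rw [Finset.mul_sum, Finset.sum_congr rfl (fun B hB => hc (L i) (hL i) B hB),
        Finset.sum_const, smul_eq_mul]
    rw [Finset.sum_congr rfl this, Finset.sum_const, smul_eq_mul, Finset.card_univ]
    ring
  have h4 := Nat.mul_le_mul_left S.card hone
  rw [h3] at h4
  exact Nat.le_of_mul_le_mul_right h4 hG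

theorem aux_transfer {K V : Type*} [Field K] [AddCommGroup V] [Module K V]
    (F₀ : Submodule K V) (N : Set (Submodule K V)) (hN : ∀ T ∈ N, T ≤ F₀) :
    {T : Submodule K F₀ | T.map F₀.subtype ∈ N}.ncard = N.ncard := by
  rw [← Set.ncard_image_of_injective _ (Submodule.map_injective_of_injective F₀.injective_subtype)]
  congr 1
  ext T
  constructor
  · rintro ⟨T', h, rfl⟩
    exact h
  · intro h
    have : (T.comap F₀.subtype).map F₀.subtype = T := by
      rw [Submodule.map_comap_subtype, inf_eq_right.2 (hN T h)]
    exact ⟨T.comap F₀.subtype, by rw [Set.mem_ofPred_eq, this]; exact h, this⟩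

theorem stmt11 (q n t : ℕ) (K : Type*) [Field K] [Fintype K] (hK : Fintype.card K = q)
    (V : Type*) [AddCommGroup V] [Module K V] [FiniteDimensional K V]
    (hV : Module.finrank K V = n) (ht : 1 ≤ t) (hn : 2 * t + 1 ≤ n)
    (F : Set (Submodule K V)) (hdim : ∀ A ∈ F, Module.finrank K A = 2 * t)
    (hcf : IsCoverFree F)
    (F₀ : Submodule K V) (hF₀ : F₀ ∈ F) :
    ((q : ℚ) ^ t * GaussQ q (2 * t - 1) t ≤ ((Mset F t F₀).ncard : ℚ)) ∧
    (((Nset F t F₀).ncard : ℚ) ≤ GaussQ q (2 * t - 1) (t - 1)) ∧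
    ((((Mset F t F₀).ncard : ℚ) = (q : ℚ) ^ t * GaussQ q (2 * t - 1) t ∧
        ((Nset F t F₀).ncard : ℚ) = GaussQ q (2 * t - 1) (t - 1)) ↔
      ((∀ A ∈ Nset F t F₀, ∀ B ∈ Nset F t F₀, A ⊓ B ≠ ⊥) ∧
        ((Nset F t F₀).ncard : ℚ) = GaussQ q (2 * t - 1) (t - 1))) := by
  classical
  have : Finite V := Module.finite_of_finite K
  have hfin : Finite (Submodule K V) :=
    Finite.of_injective (fun S => (S : Set V)) SetLike.coe_injective
  have hq1 : 1 < q := hK ▸ Fintype.one_lt_card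
  obtain ⟨s, rfl⟩ : ∃ s, t = s + 1 := ⟨t - 1, by omega⟩
  have hother : ∀ T ∈ Nset F (s + 1) F₀, ∃ G ∈ F, G ≠ F₀ ∧ T ≤ G := by
    rintro T ⟨_, _, h3⟩
    obtain ⟨G, hG, hne⟩ := Set.exists_ne_of_one_lt_ncard h3 F₀
    exact ⟨G, hG.1, hne, hG.2⟩
  have hint : ∀ A ∈ Nset F (s + 1) F₀, ∀ B ∈ Nset F (s + 1) F₀, A ⊓ B ≠ ⊥ := by
    intro A hA B hB h
    have hsup : A ⊔ B = F₀ := by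
      apply Submodule.eq_of_le_of_finrank_eq (sup_le hA.1 hB.1)
      have := Submodule.finrank_sup_add_finrank_inf_eq A B
      rw [h, finrank_bot, hA.2.1, hB.2.1] at this
      rw [hdim F₀ hF₀]
      omega
    obtain ⟨G, hG, hG1, hG2⟩ := hother A hA
    obtain ⟨H, hH, hH1, hH2⟩ := hother B hB
    by_cases hGH : G = H
    · subst hGH
      apply hG1
      symm
      apply Submodule.eq_of_le_of_finrank_eq
      · rw [← hsup]; exact sup_le hG2 hH2
      · rw [hdim _ hF₀, hdim _ hG]
    · apply hcf
      refine ⟨F₀, G, H, hF₀, hG, hH, hG1.symm, hH1.symm, hGH, ?_⟩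
      calc F₀ = A ⊔ B := hsup.symm
        _ ≤ _ := sup_le_sup (le_inf hA.1 hG2) (le_inf hB.1 hH2)
  have hfr : ∀ T : Submodule K F₀, Module.finrank K (T.map F₀.subtype) = Module.finrank K T :=
    fun T => LinearEquiv.finrank_eq
      (Submodule.equivMapOfInjective F₀.subtype F₀.injective_subtype T).symm
  have htot : ({T : Submodule K V | T ≤ F₀ ∧ Module.finrank K T = s + 1}.ncard : ℚ) =
      ((q : ℚ) ^ (s + 1) + 1) * GaussQ q (2 * (s + 1) - 1) s := by
    rw [← aux_gauss1 hq1, ← hK, ← hdim F₀ hF₀, ← aux_countQ (by rw [hdim F₀ hF₀]; omega),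
      ← aux_transfer F₀ _ (fun T h => h.1)]
    simp only [Set.mem_ofPred_eq, hfr, Submodule.map_subtype_le, true_and]
  have hekr := aux_ekr (K := K) (W := F₀) ht (hdim F₀ hF₀)
    {T | T.map F₀.subtype ∈ Nset F (s + 1) F₀}
    (fun T hT => by rw [← hfr]; exact hT.2.1)
    (fun A hA B hB h => by
      apply hint _ hA _ hB
      rw [← Submodule.map_inf _ F₀.injective_subtype, h, Submodule.map_bot])
  rw [aux_transfer F₀ _ (fun T h => h.1), hK] at hekr
  have hekr' : ((Nset F (s + 1) F₀).ncard : ℚ) * ((q : ℚ) ^ (s + 1) + 1) ≤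
      ((q : ℚ) ^ (s + 1) + 1) * GaussQ q (2 * (s + 1) - 1) s := by
    rw [← aux_gauss1 hq1, ← hK, ← hdim F₀ hF₀, ← aux_countQ (by rw [hdim F₀ hF₀]; omega), hK]
    exact_mod_cast hekr
  have hMN : ((Mset F (s + 1) F₀).ncard : ℚ) + (Nset F (s + 1) F₀).ncard =
      ((q : ℚ) ^ (s + 1) + 1) * GaussQ q (2 * (s + 1) - 1) s := by
    rw [← htot, ← Nat.cast_add, ← Set.ncard_union_eq]
    · congr 2
      ext T
      simp only [Mset, Nset, Set.mem_union, Set.mem_ofPred_eq]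
      constructor
      · rintro (h | h)
        · exact ⟨h.1, h.2.1⟩
        · exact ⟨h.1, h.2.1⟩
      · rintro ⟨h1, h2⟩
        have : 0 < {G ∈ F | T ≤ G}.ncard := (Set.ncard_pos (Set.toFinite _)).2 ⟨F₀, hF₀, h1⟩
        rcases Nat.lt_or_ge 1 {G ∈ F | T ≤ G}.ncard with h | h
        · exact Or.inr ⟨h1, h2, h⟩
        · exact Or.inl ⟨h1, h2, by omega⟩
    · rw [Set.disjoint_left]
      rintro T h h'
      have h1 := h.2.2
      have h2 := h'.2.2
      omega
  rw [Nat.add_sub_cancel, aux_gauss2 hq1]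
  have hpos : (0 : ℚ) < (q : ℚ) ^ (s + 1) + 1 := by positivity
  have hNle : ((Nset F (s + 1) F₀).ncard : ℚ) ≤ GaussQ q (2 * (s + 1) - 1) s := by
    rw [mul_comm] at hekr'
    exact le_of_mul_le_mul_left hekr' hpos
  refine ⟨by linarith, hNle, ⟨fun h => ⟨hint, h.2⟩, fun h => ⟨by linarith [h.2], h.2⟩⟩⟩
end

section
/- Let V be an n-dimensional vector space over the finite field 𝔽_q with n ≥ 2t+1 and t ≥ 2, let F be a cover-free family of 2t-dimensional subspaces of V, and set t₀ = min{[t choose 1]_q, q^{3t-n-1}[n-2t+1 choose 1]_q} (a rational number). Then for any two t-dimensional subspaces A and T of V, and any fixed (n-t)-dimensional subspace R with R ⊕ T = V, the number of F ∈ F_T with A ∈ A(F, T) is at most t₀. -/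
/-- The family `𝒜(F₀, T)`: all `t`-dimensional subspaces `A` of `V` with
`dim (A ∩ T) = 0`, `dim (A ∩ F₀) = t - 1`, such that there is a one-dimensional
subspace `E` of `F₀ ∩ R` with `|F_{T ⊕ E}| > 1` and `F₀ = T ⊕ E ⊕ (A ∩ F₀)`. -/
def FamA {K V : Type*} [Field K] [AddCommGroup V] [Module K V]
    (F : Set (Submodule K V)) (t : ℕ) (F₀ T R : Submodule K V) :
    Set (Submodule K V) :=
  {A | Module.finrank K A = t ∧ A ⊓ T = ⊥ ∧ Module.finrank K ↥(A ⊓ F₀) = t - 1 ∧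
    ∃ E : Submodule K V, E ≤ F₀ ⊓ R ∧ Module.finrank K E = 1 ∧
      1 < {G ∈ F | T ⊔ E ≤ G}.ncard ∧
      T ⊓ E = ⊥ ∧ (T ⊔ E) ⊓ (A ⊓ F₀) = ⊥ ∧ T ⊔ E ⊔ (A ⊓ F₀) = F₀}

open Module in
lemma sub_points_le {K V : Type*} [Field K] [Fintype K] [AddCommGroup V] [Module K V]
    [FiniteDimensional K V] (Y X : Submodule K V) (d : ℕ) (hd : finrank K X = finrank K Y + d)
    (S : Set (Submodule K V))
    (hS : ∀ M ∈ S, Y ≤ M ∧ M ≤ X ∧ finrank K M = finrank K Y + 1) :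
    S.ncard ≤ ∑ i ∈ Finset.range d, Fintype.card K ^ i := by
  classical
  rcases S.eq_empty_or_nonempty with rfl | ⟨M0, hM0⟩
  · simp
  have hYX : Y ≤ X := (hS M0 hM0).1.trans (hS M0 hM0).2.1
  obtain ⟨C0, hC0⟩ := Submodule.exists_isCompl Y
  set C := C0 ⊓ X with hC
  have hYC : Y ⊓ C = ⊥ := by
    rw [hC, ← inf_assoc, hC0.inf_eq_bot, bot_inf_eq]
  have hYCX : Y ⊔ C = X := by
    rw [hC, ← sup_inf_assoc_of_le _ hYX, hC0.sup_eq_top, top_inf_eq]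
  have hCd : finrank K C = d := by
    have := Submodule.finrank_sup_add_finrank_inf_eq Y C
    rw [hYC, hYCX, finrank_bot] at this
    omega
  have hMe : ∀ M ∈ S, Y ⊔ (C ⊓ M) = M := by
    intro M hM
    rw [← sup_inf_assoc_of_le _ (hS M hM).1, hYCX, inf_eq_right.2 (hS M hM).2.1]
  have hM1 : ∀ M ∈ S, finrank K ↥(C ⊓ M) = 1 := by
    intro M hM
    have := Submodule.finrank_sup_add_finrank_inf_eq Y (C ⊓ M)
    rw [hMe M hM, ← inf_assoc, hYC, bot_inf_eq, finrank_bot, (hS M hM).2.2] at this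
    omega
  have hex : ∀ M : S, ∃ v : C, ∃ _ : v ≠ 0, (K ∙ (v : V)) = C ⊓ M.1 := by
    intro M
    obtain ⟨v, hv0, hv⟩ := finrank_eq_one_iff'.1 (hM1 M.1 M.2)
    refine ⟨⟨v, v.2.1⟩, ?_, ?_⟩
    · intro h
      apply hv0
      ext
      simpa using congrArg Subtype.val h
    · apply le_antisymm
      · rw [Submodule.span_singleton_le_iff_mem]; exact v.2
      · intro w hw
        obtain ⟨c, hc⟩ := hv ⟨w, hw⟩
        exact Submodule.mem_span_singleton.2 ⟨c, congrArg Subtype.val hc⟩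
  choose v hv0 hv using hex
  haveI : Finite V := Module.finite_of_finite K
  have := Nat.card_le_card_of_injective (fun M : S => Projectivization.mk K (v M) (hv0 M)) (by
    intro M N h
    obtain ⟨a, ha⟩ := (Projectivization.mk_eq_mk_iff K _ _ (hv0 M) (hv0 N)).1 h
    have h1 : (K ∙ (v M : V)) = K ∙ (v N : V) := by
      rw [← ha]
      exact Submodule.span_singleton_group_smul_eq K a (v N : V)
    rw [hv, hv] at h1
    apply Subtype.ext
    rw [← hMe M.1 M.2, ← hMe N.1 N.2, h1])
  rw [Projectivization.card_of_finrank K C hCd, Nat.card_eq_fintype_card (α := K)] at this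
  exact this

open Module in
lemma sub_hyper_le {K V : Type*} [Field K] [Fintype K] [AddCommGroup V] [Module K V]
    [FiniteDimensional K V] (t : ℕ) (hd : finrank K V = t + 1)
    (S : Set (Submodule K V))
    (hS : ∀ M ∈ S, finrank K M = t) :
    S.ncard ≤ ∑ i ∈ Finset.range (t + 1), Fintype.card K ^ i := by
  have hinj : Function.Injective (Submodule.dualAnnihilator : Submodule K V → _) := by
    intro a b h
    exact Subspace.dualAnnihilator_inj.1 h
  rw [← Set.ncard_image_of_injective S hinj]
  apply sub_points_le ⊥ ⊤
  · rw [finrank_top, finrank_bot, Subspace.dual_finrank_eq, hd, zero_add]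
  · rintro _ ⟨M, hM, rfl⟩
    refine ⟨bot_le, le_top, ?_⟩
    have := Subspace.finrank_add_finrank_dualAnnihilator_eq M
    have := hS M hM
    rw [finrank_bot]
    omega

lemma gauss_one {q m : ℕ} (hq : 2 ≤ q) :
    GaussQ q m 1 = ((∑ i ∈ Finset.range m, q ^ i : ℕ) : ℚ) := by
  have : (q : ℚ) ≠ 1 := by
    have : (2 : ℚ) ≤ q := by exact_mod_cast hq
    linarith
  simp [GaussQ, geom_sum_eq this]

lemma arith_a {q n t : ℕ} (hq : 2 ≤ q) (hn : 3 * t ≤ n + 1) (hn2 : 2 * t + 1 ≤ n) :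
    GaussQ q t 1 ≤ (q : ℚ) ^ ((3 * t : ℤ) - n - 1) * GaussQ q (n - 2 * t + 1) 1 := by
  have h2 : (2 : ℚ) ≤ q := by exact_mod_cast hq
  have h0 : (q : ℚ) ≠ 0 := by positivity
  have e : (q : ℚ) ^ ((3 * t : ℤ) - n - 1) * (q : ℚ) ^ (n - 2 * t + 1) = q ^ t := by
    rw [← zpow_natCast, ← zpow_natCast, ← zpow_add₀ h0]
    congr 1
    push_cast [show 2 * t ≤ n by omega]
    ring
  have h1 : (q : ℚ) ^ ((3 * t : ℤ) - n - 1) ≤ 1 :=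
    zpow_le_one_of_nonpos₀ (by linarith) (by omega)
  simp only [GaussQ, Finset.prod_range_one, Nat.sub_zero, pow_one]
  rw [← mul_div_assoc, mul_sub, e]
  apply div_le_div_of_nonneg_right _ (by linarith)
  linarith

lemma arith_b {q n t : ℕ} (hq : 2 ≤ q) (hn : n + 2 ≤ 3 * t) (hn2 : 2 * t + 1 ≤ n) :
    ((q : ℚ) + 1) * GaussQ q (n - 2 * t) 1 ≤
      (q : ℚ) ^ ((3 * t : ℤ) - n - 1) * GaussQ q (n - 2 * t + 1) 1 := by
  have h2 : (2 : ℚ) ≤ q := by exact_mod_cast hq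
  have h1 : (q : ℚ) ≤ (q : ℚ) ^ ((3 * t : ℤ) - n - 1) := by
    conv_lhs => rw [← zpow_one (q : ℚ)]
    exact zpow_le_zpow_right₀ (by linarith) (by omega)
  simp only [GaussQ, Finset.prod_range_one, Nat.sub_zero, pow_one]
  obtain ⟨s, hs⟩ : ∃ s, n - 2 * t = s := ⟨_, rfl⟩
  rw [hs]
  have hp : (1 : ℚ) ≤ (q : ℚ) ^ s := one_le_pow₀ (by linarith)
  have hp' : (1 : ℚ) ≤ (q : ℚ) ^ (s + 1) := one_le_pow₀ (by linarith)
  refine le_trans ?_ (mul_le_mul_of_nonneg_right h1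
    (div_nonneg (by linarith) (by linarith)))
  rw [← mul_div_assoc, ← mul_div_assoc]
  apply div_le_div_of_nonneg_right _ (by linarith)
  rw [pow_succ]
  nlinarith [mul_nonneg (show (0 : ℚ) ≤ (q : ℚ) - 2 by linarith) (show (0 : ℚ) ≤ q by linarith), mul_nonneg (show (0:ℚ) ≤ (q : ℚ) ^ s by linarith) (show (0:ℚ) ≤ (q : ℚ) * q - q - 1 by nlinarith)]

open Module in
theorem stmt12 (q n t : ℕ) (K : Type*) [Field K] [Fintype K] (hK : Fintype.card K = q)
    (V : Type*) [AddCommGroup V] [Module K V] [FiniteDimensional K V]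
    (hV : Module.finrank K V = n) (ht : 2 ≤ t) (hn : 2 * t + 1 ≤ n)
    (F : Set (Submodule K V)) (hdim : ∀ A ∈ F, Module.finrank K A = 2 * t)
    (hcf : IsCoverFree F)
    (A T : Submodule K V) (hA : Module.finrank K A = t) (hT : Module.finrank K T = t)
    (R : Submodule K V) (hR : Module.finrank K R = n - t)
    (hRT : R ⊓ T = ⊥) (hRTsum : R ⊔ T = ⊤) :
    ({G ∈ F | T ≤ G ∧ A ∈ FamA F t G T R}.ncard : ℚ) ≤
      min (GaussQ q t 1) ((q : ℚ) ^ ((3 * t : ℤ) - n - 1) * GaussQ q (n - 2 * t + 1) 1) := by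
  classical
  haveI : Finite V := Module.finite_of_finite K
  have hq : 2 ≤ q := by rw [← hK]; exact Fintype.one_lt_card
  set S := {G ∈ F | T ≤ G ∧ A ∈ FamA F t G T R} with hSdef
  have hinj : Set.InjOn (fun G : Submodule K V => G.comap A.subtype) S := by
    rintro G ⟨hGF, hTG, -, -, -, E, hE, hE1, hnc, -, -, hsum⟩ G2 ⟨hG2F, hTG2, -⟩ h
    have hB : A ⊓ G ≤ G2 := by
      intro x hx
      have : (⟨x, hx.1⟩ : A) ∈ G.comap A.subtype := hx.2
      have h' : G.comap A.subtype = G2.comap A.subtype := h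
      rw [h'] at this
      exact this
    by_contra hne
    obtain ⟨G', ⟨hG'F, hG'⟩, hG'ne⟩ := Set.exists_ne_of_one_lt_ncard hnc G
    have hTE : T ⊔ E ≤ G := sup_le hTG (hE.trans inf_le_left)
    by_cases h2 : G' = G2
    · subst h2
      have : G ≤ G' := by rw [← hsum]; exact sup_le hG' hB
      exact hne (Submodule.eq_of_le_of_finrank_eq this (by rw [hdim _ hGF, hdim _ hG'F]))
    · apply hcf
      refine ⟨G, G', G2, hGF, hG'F, hG2F, Ne.symm hG'ne, hne, h2, ?_⟩
      conv_lhs => rw [← hsum]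
      exact sup_le_sup (le_inf hTE hG') (le_inf inf_le_right hB)
  have hfirst : (S.ncard : ℚ) ≤ GaussQ q t 1 := by
    rw [gauss_one hq, ← hinj.ncard_image, ← hK]
    obtain ⟨r, rfl⟩ : ∃ r, t = r + 1 := ⟨t - 1, by omega⟩
    norm_cast
    apply sub_hyper_le r hA
    rintro _ ⟨G, ⟨hGF, hTG, -, -, h, -⟩, rfl⟩
    have e := LinearEquiv.finrank_eq (Submodule.equivMapOfInjective A.subtype
      A.injective_subtype (G.comap A.subtype))
    rw [Submodule.map_comap_subtype, h] at e
    simpa using e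
  refine le_min hfirst ?_
  by_cases hc : 3 * t ≤ n + 1
  · exact hfirst.trans (arith_a hq hc hn)
  refine le_trans ?_ (arith_b hq (by omega) hn)
  rw [gauss_one hq]
  by_cases hSe : S = ∅
  · rw [hSe]; simp; positivity
  obtain ⟨G0, hG0⟩ := Set.nonempty_iff_ne_empty.2 hSe
  have hAT : A ⊓ T = ⊥ := hG0.2.2.2.1
  have hATd : finrank K ↥(A ⊔ T) = 2 * t := by
    have := Submodule.finrank_sup_add_finrank_inf_eq A T
    rw [hAT, finrank_bot] at this
    omega
  have hGA : ∀ G ∈ S, finrank K ↥(G ⊔ A) = 2 * t + 1 := by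
    rintro G ⟨hGF, hTG, -, -, h, -⟩
    have := Submodule.finrank_sup_add_finrank_inf_eq A G
    rw [h, hdim G hGF, sup_comm] at this
    omega
  have hfin : S.Finite := Set.toFinite S
  have hmain := Finset.card_le_mul_card_image (f := fun G : Submodule K V => G ⊔ A)
    hfin.toFinset (q + 1) (by
      intro U hU
      rw [← Set.ncard_coe_finset]
      set P := ((hfin.toFinset.filter (fun G => G ⊔ A = U) : Finset (Submodule K V)) : Set (Submodule K V)) with hP
      have hPm : ∀ G, G ∈ P ↔ G ∈ S ∧ G ⊔ A = U := by intro G; simp [hP]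
      by_cases hsub : P.Subsingleton
      · exact (Set.ncard_le_one_iff_subsingleton.2 hsub).trans (by omega)
      rw [Set.not_subsingleton_iff] at hsub
      obtain ⟨G1, h1, G2, h2, h12⟩ := hsub
      have hdimI : ∀ X ∈ P, ∀ Y ∈ P, X ≠ Y → finrank K ↥(X ⊓ Y) = 2 * t - 1 := by
        intro X hX Y hY hXY
        rw [hPm] at hX hY
        have a := Submodule.finrank_sup_add_finrank_inf_eq X Y
        have b : finrank K ↥(X ⊔ Y) ≤ 2 * t + 1 := by
          rw [← hGA X hX.1, hX.2]
          exact Submodule.finrank_mono (sup_le (hX.2 ▸ le_sup_left) (hY.2 ▸ le_sup_left))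
        have c := hdim X hX.1.1
        have d := hdim Y hY.1.1
        have e : finrank K ↥(X ⊓ Y) < finrank K X := by
          apply Submodule.finrank_lt_finrank_of_lt
          refine lt_of_le_of_ne inf_le_left fun h => hXY ?_
          exact Submodule.eq_of_le_of_finrank_eq (inf_eq_left.1 h) (by rw [c, d])
        omega
      have hD := hdimI G1 h1 G2 h2 h12
      have hall : ∀ G ∈ P, G1 ⊓ G2 ≤ G := by
        intro G hG
        by_cases e1 : G = G1
        · subst e1; exact inf_le_left
        by_cases e2 : G = G2
        · subst e2; exact inf_le_right
        by_contra hnot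
        apply hcf
        have k1 := ((hPm G1).1 h1).1.1
        refine ⟨G1, G2, G, k1, ((hPm G2).1 h2).1.1,
          ((hPm G).1 hG).1.1, h12, Ne.symm e1, Ne.symm e2, ?_⟩
        have hD' := hdimI G1 h1 G hG (Ne.symm e1)
        have hlt : G1 ⊓ G < (G1 ⊓ G2) ⊔ (G1 ⊓ G) := by
          refine lt_of_le_of_ne le_sup_right fun h => hnot ?_
          exact (le_sup_left.trans h.symm.le).trans inf_le_right
        have hlt' := Submodule.finrank_lt_finrank_of_lt hlt
        have := Submodule.eq_of_le_of_finrank_le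
          (show (G1 ⊓ G2) ⊔ (G1 ⊓ G) ≤ G1 from sup_le inf_le_left inf_le_left)
          (by rw [hdim G1 k1]; omega)
        exact this.ge
      have hU' := hGA G1 ((hPm G1).1 h1).1
      rw [((hPm G1).1 h1).2] at hU'
      have := sub_points_le (G1 ⊓ G2) U 2 (by omega) P (by
        intro M hM
        refine ⟨hall M hM, ((hPm M).1 hM).2 ▸ le_sup_left, ?_⟩
        rw [hdim M ((hPm M).1 hM).1.1]; omega)
      rw [hK] at this
      simp [Finset.sum_range_succ] at this
      omega)
  have himg := sub_points_le (A ⊔ T) ⊤ (n - 2 * t) (by rw [finrank_top]; omega)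
    ((hfin.toFinset.image (fun G : Submodule K V => G ⊔ A) : Finset (Submodule K V)) : Set (Submodule K V)) (by
      intro M hM
      simp only [Finset.coe_image, Set.Finite.coe_toFinset] at hM
      obtain ⟨G, hG, rfl⟩ := hM
      refine ⟨sup_le le_sup_right (hG.2.1.trans le_sup_left), le_top, ?_⟩
      rw [hATd]; exact hGA G hG)
  rw [Set.ncard_coe_finset, hK] at himg
  rw [← Set.ncard_eq_toFinset_card S hfin] at hmain
  exact_mod_cast hmain.trans (Nat.mul_le_mul_left _ himg)
end

section
/- Let V be an n-dimensional vector space over the finite field 𝔽_q with n ≥ 2t+1 and t ≥ 2, let F be a cover-free family of 2t-dimensional subspaces of V, let T be a t-dimensional subspace of V, and fix an (n-t)-dimensional subspace R with R ⊕ T = V. Then Σ_{F ∈ F_T} |A(F, T)| ≥ q^{t²+1} [n-2t choose 1]_q ([t choose 1]_q |F_T| - [n-t choose 1]_q). -/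
open Module in
theorem aux_complW {K W : Type*} [Field K] [Fintype K] [AddCommGroup W] [Module K W]
    [FiniteDimensional K W] (p : Submodule K W) (a b : ℕ) (ha : finrank K p = a)
    (hb : finrank K W = a + b) :
    Fintype.card K ^ (a * b) ≤ Nat.card {s : Submodule K W // IsCompl p s} := by
  classical
  have : Finite W := Module.finite_of_finite K
  obtain ⟨c, hc⟩ := p.exists_isCompl
  let e := Submodule.isComplEquivProj p
  let π := e ⟨c, hc⟩
  have hπ := π.2
  let Φ : ((W ⧸ p) →ₗ[K] p) → {s : Submodule K W // IsCompl p s} := fun f =>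
    e.symm ⟨π.1 + f.comp p.mkQ, by
      intro x
      have : p.mkQ (x : W) = 0 := by simp
      rw [LinearMap.add_apply, LinearMap.comp_apply, this, map_zero, add_zero, hπ x]⟩
  have hΦ : Function.Injective Φ := by
    intro f g hfg
    have h1 := e.symm.injective hfg
    have h2 := Subtype.ext_iff.1 h1
    have h3 : f.comp p.mkQ = g.comp p.mkQ := add_left_cancel h2
    ext1
    exact h3
  have : Finite {s : Submodule K W // IsCompl p s} := inferInstance
  have h := Nat.card_le_card_of_injective Φ hΦ
  rw [Module.natCard_eq_pow_finrank (K := K), finrank_linearMap, Nat.card_eq_fintype_card] at h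
  have h5 := Submodule.finrank_quotient_add_finrank p
  have h6 : finrank K (W ⧸ p) = b := by omega
  rw [h6, ha, mul_comm] at h
  exact h

open Module in
theorem aux_compl {K V : Type*} [Field K] [Fintype K] [AddCommGroup V] [Module K V]
    [FiniteDimensional K V] (F P : Submodule K V) (hPF : P ≤ F) (a b : ℕ) (ha : finrank K P = a)
    (hb : finrank K F = a + b) :
    Fintype.card K ^ (a * b) ≤ {B : Submodule K V | B ≤ F ∧ P ⊓ B = ⊥ ∧ P ⊔ B = F}.ncard := by
  classical
  have : Finite V := Module.finite_of_finite K
  have h := aux_complW (P.submoduleOf F) a b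
    (by rw [← ha]; exact (Submodule.submoduleOfEquivOfLe hPF).finrank_eq) hb
  refine h.trans ?_
  rw [← Nat.card_coe_set_eq]
  have hP : (P.submoduleOf F).map F.subtype = P := by
    rw [Submodule.submoduleOf, Submodule.map_comap_subtype]; exact inf_eq_right.2 hPF
  refine Nat.card_le_card_of_injective
    (fun s => ⟨s.1.map F.subtype, Submodule.map_subtype_le _ _, ?_, ?_⟩) ?_
  · have := congrArg (Submodule.map F.subtype) s.2.inf_eq_bot
    rwa [Submodule.map_inf _ F.injective_subtype, hP, Submodule.map_bot] at this
  · have := congrArg (Submodule.map F.subtype) s.2.sup_eq_top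
    rwa [Submodule.map_sup, hP, Submodule.map_top, Submodule.range_subtype] at this
  · intro s s' hs
    have := Subtype.ext_iff.1 hs
    exact Subtype.ext (Submodule.map_injective_of_injective F.injective_subtype this)

open Module in
theorem aux_ncard {K V : Type*} [Field K] [Fintype K] [AddCommGroup V] [Module K V]
    [FiniteDimensional K V] (A : Submodule K V) :
    (A : Set V).ncard = Fintype.card K ^ finrank K A := by
  rw [← Nat.card_coe_set_eq, ← Nat.card_eq_fintype_card]
  exact Module.natCard_eq_pow_finrank (K := K) (V := A)

open Module in
theorem aux_ncard_diff {K V : Type*} [Field K] [Fintype K] [AddCommGroup V] [Module K V]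
    [FiniteDimensional K V] (A B : Submodule K V) :
    ((A : Set V) \ B).ncard =
      Fintype.card K ^ finrank K A - Fintype.card K ^ finrank K ↥(A ⊓ B) := by
  have : Finite V := Module.finite_of_finite K
  rw [← aux_ncard, ← aux_ncard, ← Set.ncard_sdiff (by simp) (Set.toFinite _)]
  congr 1
  ext x
  simp

/-- good vectors -/
def goodVec {K V : Type*} [Field K] [AddCommGroup V] [Module K V]
    (F : Set (Submodule K V)) (G T R : Submodule K V) : Set V :=
  {e | e ∈ G ⊓ R ∧ e ≠ 0 ∧ 1 < {H ∈ F | T ⊔ Submodule.span K {e} ≤ H}.ncard}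

open Module in
theorem aux_local {K V : Type*} [Field K] [Fintype K] [AddCommGroup V] [Module K V]
    [FiniteDimensional K V] (F : Set (Submodule K V)) (t m : ℕ) (ht : 2 ≤ t)
    (G T R : Submodule K V) (hV : finrank K V = 2 * t + m)
    (hG : finrank K G = 2 * t) (hT : finrank K T = t) (hTG : T ≤ G) (hRT : R ⊓ T = ⊥)
    (hGR : finrank K ↥(G ⊓ R) = t) (hGRT : G ⊓ R ⊔ T = G) :
    (goodVec F G T R).ncard * (Fintype.card K ^ ((t + 1) * (t - 1)) *
      (Fintype.card K ^ (2 * t + m) - Fintype.card K ^ (2 * t))) ≤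
    ((Fintype.card K ^ t - Fintype.card K ^ (t - 1)) *
      (Fintype.card K ^ t - Fintype.card K ^ (t - 1))) * (FamA F t G T R).ncard := by
  classical
  have : Finite V := Module.finite_of_finite K
  have : Fintype V := Fintype.ofFinite V
  have : Fintype (Submodule K V) := Fintype.ofFinite _
  set q := Fintype.card K with hq
  let SB : V → Set (Submodule K V) := fun e =>
    {B | B ≤ G ∧ (T ⊔ Submodule.span K {e}) ⊓ B = ⊥ ∧ (T ⊔ Submodule.span K {e}) ⊔ B = G}
  have hdimP : ∀ e ∈ goodVec F G T R, T ⊓ Submodule.span K {e} = ⊥ ∧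
      finrank K ↥(T ⊔ Submodule.span K {e}) = t + 1 := by
    rintro e ⟨he, he0, -⟩
    have h1 : T ⊓ Submodule.span K {e} = ⊥ := by
      rw [eq_bot_iff, ← hRT, inf_comm]
      refine inf_le_inf_right _ ?_
      rw [Submodule.span_singleton_le_iff_mem]; exact he.2
    refine ⟨h1, ?_⟩
    have h2 := Submodule.finrank_sup_add_finrank_inf_eq T (Submodule.span K {e})
    rw [h1, finrank_bot, hT, finrank_span_singleton he0] at h2
    simpa using h2
  have hPG : ∀ e ∈ goodVec F G T R, T ⊔ Submodule.span K {e} ≤ G := by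
    rintro e ⟨he, he0, -⟩
    refine sup_le hTG ?_
    rw [Submodule.span_singleton_le_iff_mem]; exact he.1
  let O : Set V := (G : Set V)ᶜ
  let D : Finset (Σ _ : V, Submodule K V × V) :=
    (goodVec F G T R).toFinset.sigma (fun e => (SB e).toFinset ×ˢ O.toFinset)
  have hO : O.toFinset.card = q ^ (2 * t + m) - q ^ (2 * t) := by
    rw [← Set.ncard_eq_toFinset_card']
    have := aux_ncard_diff (⊤ : Submodule K V) G
    rw [top_inf_eq, finrank_top, hV, hG] at this
    rw [← this]
    congr 1
    ext x; simp [O]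
  have hD : (goodVec F G T R).ncard * (q ^ ((t + 1) * (t - 1)) *
      (q ^ (2 * t + m) - q ^ (2 * t))) ≤ D.card := by
    rw [Finset.card_sigma, Set.ncard_eq_toFinset_card', ← smul_eq_mul]
    refine Finset.card_nsmul_le_sum _ _ _ ?_
    intro e he
    rw [Set.mem_toFinset] at he
    rw [Finset.card_product, hO]
    refine Nat.mul_le_mul_right _ ?_
    rw [← Set.ncard_eq_toFinset_card']
    exact aux_compl G _ (hPG e he) (t + 1) (t - 1) (hdimP e he).2 (by omega)
  refine hD.trans ?_
  rw [Set.ncard_eq_toFinset_card' (FamA F t G T R)]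
  have hkey : ∀ (B : Submodule K V) (v : V), B ≤ G → v ∉ G →
      (B ⊔ Submodule.span K {v}) ⊓ G = B := by
    intro B v hB hv
    rw [sup_inf_assoc_of_le _ hB]
    have : Submodule.span K {v} ⊓ G = ⊥ := by
      rw [eq_bot_iff]
      rintro x ⟨hx, hxG⟩
      obtain ⟨c, rfl⟩ := Submodule.mem_span_singleton.1 hx
      by_cases hc : c = 0
      · simp [hc]
      · exact absurd ((G.smul_mem_iff hc).1 hxG) hv
    rw [this, sup_bot_eq]
  refine Finset.card_le_mul_card_image_of_maps_to
    (f := fun x => x.2.1 ⊔ Submodule.span K {x.2.2}) ?_ _ ?_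
  · rintro ⟨e, B, v⟩ hx
    simp only [D, Finset.mem_sigma, Finset.mem_product, Set.mem_toFinset] at hx
    obtain ⟨he, ⟨hB, hPB, hPBG⟩, hv⟩ := hx
    have hv' : v ∉ G := hv
    rw [Set.mem_toFinset]
    have hk := hkey B v hB hv'
    have hBdim : finrank K B = t - 1 := by
      have h2 := Submodule.finrank_sup_add_finrank_inf_eq (T ⊔ Submodule.span K {e}) B
      rw [hPB, hPBG, finrank_bot, hG, (hdimP e he).2] at h2
      omega
    have hv0 : v ≠ 0 := by rintro rfl; exact hv' G.zero_mem
    refine ⟨?_, ?_, ?_, Submodule.span K {e}, ?_, finrank_span_singleton he.2.1, he.2.2,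
      (hdimP e he).1, ?_, ?_⟩
    · have h2 := Submodule.finrank_sup_add_finrank_inf_eq B (Submodule.span K {v})
      have h3 : B ⊓ Submodule.span K {v} = ⊥ := by
        rw [eq_bot_iff]
        rintro x ⟨hxB, hx⟩
        obtain ⟨c, rfl⟩ := Submodule.mem_span_singleton.1 hx
        by_cases hc : c = 0
        · simp [hc]
        · exact absurd ((G.smul_mem_iff hc).1 (hB hxB)) hv'
      rw [h3, finrank_bot, hBdim, finrank_span_singleton hv0] at h2
      simp only
      omega
    · simp only
      rw [← inf_eq_right.2 hTG, ← inf_assoc, hk, eq_bot_iff, ← hPB, inf_comm]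
      exact inf_le_inf_right _ le_sup_left
    · simp only
      rw [hk, hBdim]
    · rw [Submodule.span_singleton_le_iff_mem]; exact he.1
    · simp only
      rw [hk, hPB]
    · simp only
      rw [hk, hPBG]
  · intro A hA
    rw [Set.mem_toFinset] at hA
    obtain ⟨hAt, hAT, hAG, E, hE, hE1, -, hTE, hTEA, hTEAG⟩ := hA
    have c1 : ((A : Set V) \ G).toFinset.card = q ^ t - q ^ (t - 1) := by
      rw [← Set.ncard_eq_toFinset_card', aux_ncard_diff, hAt, hAG]
    have c2 : (((G ⊓ R : Submodule K V) : Set V) \ ((T ⊔ (A ⊓ G) : Submodule K V) : Set V)).toFinset.card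
        = q ^ t - q ^ (t - 1) := by
      rw [← Set.ncard_eq_toFinset_card', aux_ncard_diff, hGR]
      have h1 : T ⊓ (A ⊓ G) = ⊥ := by
        rw [eq_bot_iff, ← hTEA]; exact inf_le_inf_right _ le_sup_left
      have h2 := Submodule.finrank_sup_add_finrank_inf_eq T (A ⊓ G)
      rw [h1, finrank_bot, hT, hAG] at h2
      have h3 := Submodule.finrank_sup_add_finrank_inf_eq (G ⊓ R) (T ⊔ (A ⊓ G))
      rw [← sup_assoc, hGRT, sup_eq_left.2 (inf_le_right : A ⊓ G ≤ G), hG, hGR] at h3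
      have h4 : finrank K ↥(G ⊓ R ⊓ (T ⊔ A ⊓ G)) = t - 1 := by omega
      rw [h4]
    rw [← c2]
    nth_rewrite 2 [c2]
    rw [← c1, ← Finset.card_product]
    refine Finset.card_le_card_of_injOn (fun x => (x.1, x.2.2)) ?_ ?_
    · rintro ⟨e, B, v⟩ hx
      simp only [D, Finset.coe_filter, Finset.mem_sigma, Finset.mem_product, Set.mem_toFinset,
        Set.mem_ofPred_eq] at hx
      obtain ⟨⟨he, ⟨hB, hPB, hPBG⟩, hv⟩, rfl⟩ := hx
      have hv' : v ∉ G := hv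
      have hk := hkey B v hB hv'
      simp only [Finset.coe_product, Set.coe_toFinset, Set.mem_prod]
      refine ⟨⟨he.1, ?_⟩, ?_, hv'⟩
      · rw [hk] at hAG ⊢
        intro hmem
        have hle : (T ⊔ Submodule.span K {e}) ⊔ B ≤ T ⊔ B := by
          refine sup_le (sup_le le_sup_left ?_) le_sup_right
          rw [Submodule.span_singleton_le_iff_mem]; exact hmem
        rw [hPBG] at hle
        have h5 := Submodule.finrank_mono hle
        have h6 := Submodule.finrank_add_le_finrank_add_finrank T B
        omega
      · exact (le_sup_right : _ ≤ B ⊔ Submodule.span K {v}) (Submodule.mem_span_singleton_self v)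
    · rintro ⟨e, B, v⟩ hx ⟨e', B', v'⟩ hx' h
      simp only [D, Finset.coe_filter, Finset.mem_sigma, Finset.mem_product, Set.mem_toFinset,
        Set.mem_ofPred_eq] at hx hx'
      obtain ⟨⟨he, ⟨hB, hPB, hPBG⟩, hv⟩, hA1⟩ := hx
      obtain ⟨⟨he', ⟨hB', hPB', hPBG'⟩, hv'⟩, hA2⟩ := hx'
      simp only [Prod.mk.injEq] at h
      obtain ⟨rfl, rfl⟩ := h
      have hk := hkey B v hB hv
      have hk' := hkey B' v hB' hv'
      rw [hA1] at hk
      rw [hA2] at hk'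
      rw [← hk, ← hk']

open Module in
theorem aux_global {K V : Type*} [Field K] [Fintype K] [AddCommGroup V] [Module K V]
    [FiniteDimensional K V] (F : Set (Submodule K V)) (t r : ℕ)
    (T R : Submodule K V) (hR : finrank K R = r)
    (S : Finset (Submodule K V)) (hS : ∀ G, G ∈ S ↔ G ∈ F ∧ T ≤ G)
    (hGR : ∀ G ∈ S, finrank K ↥(G ⊓ R) = t) :
    S.card * (Fintype.card K ^ t - 1) ≤
      (∑ G ∈ S, (goodVec F G T R).ncard) + (Fintype.card K ^ r - 1) := by
  classical
  have : Finite V := Module.finite_of_finite K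
  have : Fintype V := Fintype.ofFinite V
  have hnz : ∀ A : Submodule K V, ((A : Set V) \ {0}).ncard = Fintype.card K ^ finrank K A - 1 := by
    intro A
    have := aux_ncard_diff A ⊥
    rw [inf_bot_eq, finrank_bot, pow_zero] at this
    rw [← this]; simp
  let bad : Submodule K V → Set V := fun G => (((G ⊓ R : Submodule K V) : Set V) \ {0}) \ goodVec F G T R
  have h1 : ∀ G ∈ S, Fintype.card K ^ t - 1 = (goodVec F G T R).ncard + (bad G).ncard := by
    intro G hG
    rw [← hGR G hG, ← hnz, add_comm]
    refine (Set.ncard_sdiff_add_ncard_of_subset ?_ (Set.toFinite _)).symm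
    rintro e ⟨he, he0, -⟩
    exact ⟨he, he0⟩
  have h2 : ∑ G ∈ S, (bad G).ncard ≤ Fintype.card K ^ r - 1 := by
    rw [← hR, ← hnz]
    have h3 : ∀ G ∈ S, (bad G).ncard = (bad G).toFinset.card :=
      fun G _ => Set.ncard_eq_toFinset_card' _
    rw [Finset.sum_congr rfl h3, ← Finset.card_biUnion, Set.ncard_eq_toFinset_card']
    · refine Finset.card_le_card ?_
      intro e he
      simp only [Finset.mem_biUnion, Set.mem_toFinset] at he
      obtain ⟨G, hG, he⟩ := he
      rw [Set.mem_toFinset]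
      exact ⟨he.1.1.2, he.1.2⟩
    · intro G hG G' hG' hne
      rw [Function.onFun, Finset.disjoint_left]
      intro e he he'
      rw [Set.mem_toFinset] at he he'
      refine he.2 ⟨he.1.1, he.1.2, ?_⟩
      rw [Set.one_lt_ncard (Set.toFinite _)]
      refine ⟨G, ⟨((hS G).1 hG).1, sup_le ((hS G).1 hG).2 ?_⟩, G',
        ⟨((hS G').1 hG').1, sup_le ((hS G').1 hG').2 ?_⟩, hne⟩
      · rw [Submodule.span_singleton_le_iff_mem]; exact he.1.1.1
      · rw [Submodule.span_singleton_le_iff_mem]; exact he'.1.1.1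
  rw [← smul_eq_mul, ← Finset.sum_const, Finset.sum_congr rfl h1, Finset.sum_add_distrib]
  omega

theorem stmt13 (q n t : ℕ) (K : Type*) [Field K] [Fintype K] (hK : Fintype.card K = q)
    (V : Type*) [AddCommGroup V] [Module K V] [FiniteDimensional K V]
    (hV : Module.finrank K V = n) (ht : 2 ≤ t) (hn : 2 * t + 1 ≤ n)
    (F : Set (Submodule K V)) (hdim : ∀ A ∈ F, Module.finrank K A = 2 * t)
    (hcf : IsCoverFree F)
    (T : Submodule K V) (hT : Module.finrank K T = t)
    (R : Submodule K V) (hR : Module.finrank K R = n - t)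
    (hRT : R ⊓ T = ⊥) (hRTsum : R ⊔ T = ⊤) :
    (q : ℚ) ^ (t ^ 2 + 1) * GaussQ q (n - 2 * t) 1 *
        (GaussQ q t 1 * ({G ∈ F | T ≤ G}.ncard : ℚ) - GaussQ q (n - t) 1) ≤
      ∑ᶠ G ∈ {G ∈ F | T ≤ G}, ((FamA F t G T R).ncard : ℚ) := by
  classical
  have : Finite V := Module.finite_of_finite K
  have hfin : {G ∈ F | T ≤ G}.Finite := Set.toFinite _
  have hq1 : 1 < q := hK ▸ Fintype.one_lt_card
  obtain ⟨m, rfl⟩ : ∃ m, n = 2 * t + m := ⟨n - 2 * t, by omega⟩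
  have hmod : ∀ G ∈ hfin.toFinset, G ⊓ R ⊔ T = G ∧ Module.finrank K ↥(G ⊓ R) = t := by
    intro G hG
    rw [Set.Finite.mem_toFinset] at hG
    have h1 : G ⊓ R ⊔ T = G := by
      rw [inf_sup_assoc_of_le _ hG.2, hRTsum, inf_top_eq]
    refine ⟨h1, ?_⟩
    have h2 := Submodule.finrank_sup_add_finrank_inf_eq (G ⊓ R) T
    rw [h1, inf_assoc, hRT, inf_bot_eq, finrank_bot, hdim G hG.1, hT] at h2
    omega
  have hloc : ∀ G ∈ hfin.toFinset, _ := fun G hG =>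
    aux_local F t m ht G T R hV (hdim G ((Set.Finite.mem_toFinset _).1 hG).1) hT
      ((Set.Finite.mem_toFinset _).1 hG).2 hRT (hmod G hG).2 (hmod G hG).1
  have hglob := aux_global F t (2 * t + m - t) T R hR hfin.toFinset
    (fun G => Set.Finite.mem_toFinset _) (fun G hG => (hmod G hG).2)
  rw [finsum_mem_eq_finite_toFinset_sum _ hfin, Set.ncard_eq_toFinset_card _ hfin]
  rw [hK] at hglob
  have hqQ : (1 : ℚ) < q := by exact_mod_cast hq1
  have hq0 : (0 : ℚ) < (q : ℚ) - 1 := by linarith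
  have hqp : (0 : ℚ) < q := by linarith
  have hpow : ∀ k, 1 ≤ q ^ k := fun k => Nat.one_le_pow _ _ (by omega)
  have hg : ∀ k, GaussQ q k 1 = ((q : ℚ) ^ k - 1) / (q - 1) := by intro k; simp [GaussQ]
  rw [hg, hg, hg]
  have hsub : 2 * t + m - 2 * t = m := by omega
  rw [hsub]
  set N : Submodule K V → ℕ := fun G => (goodVec F G T R).ncard with hN
  have hloc' : ∀ G ∈ hfin.toFinset, (q : ℚ) ^ (t ^ 2 + 1) * (((q : ℚ) ^ m - 1) / (q - 1)) *
      ((N G : ℚ) / (q - 1)) ≤ ((FamA F t G T R).ncard : ℚ) := by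
    intro G hG
    have h := hloc G hG
    rw [hK] at h
    have h1 : q ^ (2 * t) ≤ q ^ (2 * t + m) := Nat.pow_le_pow_right (by omega) (by omega)
    have h2 : q ^ (t - 1) ≤ q ^ t := Nat.pow_le_pow_right (by omega) (by omega)
    have h' : ((N G * (q ^ ((t + 1) * (t - 1)) * (q ^ (2 * t + m) - q ^ (2 * t))) : ℕ) : ℚ) ≤
      (((q ^ t - q ^ (t - 1)) * (q ^ t - q ^ (t - 1)) * (FamA F t G T R).ncard : ℕ) : ℚ) := by
      exact_mod_cast h
    push_cast [Nat.cast_sub h1, Nat.cast_sub h2] at h'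
    obtain ⟨s, rfl⟩ : ∃ s, t = s + 1 := ⟨t - 1, by omega⟩
    simp only [Nat.add_sub_cancel] at h'
    have hc : (0 : ℚ) < (q : ℚ) ^ (2 * s) * ((q - 1) * (q - 1)) := by positivity
    have e1 : (q : ℚ) ^ ((s + 1) ^ 2 + 1) * (((q : ℚ) ^ m - 1) / (q - 1)) * ((N G : ℚ) / (q - 1)) =
        ((N G : ℚ) * ((q : ℚ) ^ ((s + 1 + 1) * s) * ((q : ℚ) ^ (2 * (s + 1) + m) -
          (q : ℚ) ^ (2 * (s + 1))))) / ((q : ℚ) ^ (2 * s) * ((q - 1) * (q - 1))) := by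
      have hne := hq0.ne'
      field_simp
      ring
    rw [e1, div_le_iff₀ hc]
    refine h'.trans (le_of_eq ?_)
    ring
  refine le_trans ?_ (Finset.sum_le_sum hloc')
  rw [← Finset.mul_sum, ← Finset.sum_div]
  have hm1 : (1 : ℚ) ≤ (q : ℚ) ^ m := one_le_pow₀ hqQ.le
  refine mul_le_mul_of_nonneg_left ?_ (by
    have : 0 ≤ (q : ℚ) ^ m - 1 := by linarith
    positivity)
  have hglob' : ((hfin.toFinset.card * (q ^ t - 1) : ℕ) : ℚ) ≤
      (((∑ G ∈ hfin.toFinset, N G) + (q ^ (2 * t + m - t) - 1) : ℕ) : ℚ) := by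
    exact_mod_cast hglob
  push_cast [Nat.cast_sub (hpow t), Nat.cast_sub (hpow (2 * t + m - t))] at hglob'
  rw [div_mul_eq_mul_div, ← sub_div]
  refine div_le_div_of_nonneg_right ?_ hq0.le
  linarith
end

section
/- Let V be an n-dimensional vector space over the finite field 𝔽_q with n ≥ 2t+1 and t ≥ 1, and let F be a cover-free family of 2t-dimensional subspaces of V with |F| = [n-1 choose t]_q / [2t-1 choose t]_q. Then for every t-dimensional subspace A of V, |F_A| is either 1 or (q^{n-t}-1)/(q^t-1). -/
open Module

lemma exists_equiv_comp_eq {K L E : Type*} [Field K] [AddCommGroup L] [Module K L]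
    [AddCommGroup E] [Module K E] [FiniteDimensional K L]
    (f g : L →ₗ[K] E) (hf : Function.Injective f) (hg : Function.Injective g) :
    ∃ e : E ≃ₗ[K] E, e.toLinearMap ∘ₗ f = g := by
  let ef := LinearEquiv.ofInjective f hf
  let eg := LinearEquiv.ofInjective g hg
  obtain ⟨e, he⟩ := Submodule.exists_linearEquiv_restrict_eq (ef.symm ≪≫ₗ eg)
  refine ⟨e, ?_⟩
  ext x
  have := he (ef x)
  simp only [LinearEquiv.trans_apply, LinearEquiv.symm_apply_apply] at this
  simpa [ef, eg] using this.symm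

open Classical in
lemma fiber_count {K L P E : Type*} [Field K] [AddCommGroup L] [Module K L]
    [AddCommGroup P] [Module K P]
    [AddCommGroup E] [Module K E] [FiniteDimensional K L]
    [Fintype (L →ₗ[K] E)] [Fintype (P →ₗ[K] E)]
    (i : L →ₗ[K] P) (hi : Function.Injective i) (N : Finset (L →ₗ[K] E))
    (hN : ∀ f ∈ N, Function.Injective f) :
    (Finset.univ.filter fun h : P →ₗ[K] E => Function.Injective h ∧ h ∘ₗ i ∈ N).card *
      (Finset.univ.filter fun f : L →ₗ[K] E => Function.Injective f).card =
    N.card * (Finset.univ.filter fun h : P →ₗ[K] E => Function.Injective h).card := by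
  rcases N.eq_empty_or_nonempty with rfl | ⟨f0, hf0⟩
  · simp
  set c := (Finset.univ.filter fun h : P →ₗ[K] E => Function.Injective h ∧ h ∘ₗ i = f0).card
    with hc
  have key : ∀ f : L →ₗ[K] E, Function.Injective f →
      (Finset.univ.filter fun h : P →ₗ[K] E => Function.Injective h ∧ h ∘ₗ i = f).card = c := by
    intro f hf
    obtain ⟨e, he⟩ := exists_equiv_comp_eq f f0 hf (hN _ hf0)
    refine Finset.card_bij (fun h _ => e.toLinearMap ∘ₗ h) ?_ ?_ ?_
    · intro h hh
      simp only [Finset.mem_filter, Finset.mem_univ, true_and] at hh ⊢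
      refine ⟨?_, ?_⟩
      · simpa using hh.1
      · rw [LinearMap.comp_assoc, hh.2, he]
    · intro a _ b _ hab
      ext x
      have := LinearMap.congr_fun hab x
      simpa using this
    · intro b hb
      simp only [Finset.mem_filter, Finset.mem_univ, true_and] at hb
      refine ⟨e.symm.toLinearMap ∘ₗ b, ?_, ?_⟩
      · simp only [Finset.mem_filter, Finset.mem_univ, true_and]
        refine ⟨by simpa using hb.1, ?_⟩
        rw [LinearMap.comp_assoc, hb.2, ← he]
        ext x; simp
      · ext x; simp
  have cnt : ∀ M : Finset (L →ₗ[K] E), (∀ f ∈ M, Function.Injective f) →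
      (Finset.univ.filter fun h : P →ₗ[K] E => Function.Injective h ∧ h ∘ₗ i ∈ M).card
        = M.card * c := by
    intro M hM
    rw [Finset.card_eq_sum_card_fiberwise (f := fun h => h ∘ₗ i) (t := M)]
    · rw [Finset.sum_const_nat (m := c)]
      intro f hf
      rw [← key f (hM f hf), Finset.filter_filter]
      congr 1
      ext h
      simp only [Finset.mem_filter, Finset.mem_univ, true_and]
      constructor
      · rintro ⟨⟨a, b⟩, d⟩; exact ⟨a, d⟩
      · rintro ⟨a, d⟩; exact ⟨⟨a, d ▸ hf⟩, d⟩
    · intro h hh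
      simp at hh
      exact hh.2
  have h2 := cnt (Finset.univ.filter fun f : L →ₗ[K] E => Function.Injective f) (by simp)
  have h3 : (Finset.univ.filter fun h : P →ₗ[K] E => Function.Injective h ∧ h ∘ₗ i ∈
      (Finset.univ.filter fun f : L →ₗ[K] E => Function.Injective f)) =
      (Finset.univ.filter fun h : P →ₗ[K] E => Function.Injective h) := by
    ext h
    simp only [Finset.mem_filter, Finset.mem_univ, true_and, and_iff_left_iff_imp]
    intro hh
    exact hh.comp hi
  rw [h3] at h2
  rw [cnt N hN, h2]
  ring

open Classical in
lemma ekr_maps {K L E : Type*} [Field K] [Field L] [Algebra K L] [Fintype L]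
    [AddCommGroup E] [Module K E] [FiniteDimensional K L] [FiniteDimensional K E]
    [Fintype (L →ₗ[K] E)] [Fintype (L × L →ₗ[K] E)]
    (hE : finrank K E = 2 * finrank K L) (N : Finset (L →ₗ[K] E))
    (hN : ∀ f ∈ N, Function.Injective f)
    (hmeet : ∀ f ∈ N, ∀ g ∈ N, ¬ Disjoint (LinearMap.range f) (LinearMap.range g)) :
    N.card * (Fintype.card L + 1) ≤
      (Finset.univ.filter fun f : L →ₗ[K] E => Function.Injective f).card := by
  set Φ := (Finset.univ.filter fun h : L × L →ₗ[K] E => Function.Injective h) with hΦ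
  set I := (Finset.univ.filter fun f : L →ₗ[K] E => Function.Injective f) with hI
  let i : Option L → (L →ₗ[K] L × L) := fun o => match o with
    | none => LinearMap.inl K L L
    | some a => (LinearMap.mulLeft K a).prod LinearMap.id
  have hi : ∀ o, Function.Injective (i o) := by
    intro o
    match o with
    | none => exact LinearMap.inl_injective
    | some a =>
      intro x y hxy
      have := congrArg Prod.snd hxy
      simpa [i] using this
  have hdis : ∀ o o' : Option L, o ≠ o' → ∀ x y, i o x = i o' y → i o x = 0 := by
    intro o o' hoo x y hxy
    have h1 := congrArg Prod.fst hxy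
    have h2 := congrArg Prod.snd hxy
    match o, o' with
    | none, none => exact absurd rfl hoo
    | none, some a =>
      simp [i] at h1 h2 ⊢
      rw [h1, ← h2, mul_zero]
    | some a, none =>
      simp [i] at h1 h2 ⊢
      simp [h2]
    | some a, some b =>
      simp only [i, LinearMap.prod_apply, Function.prod_apply, LinearMap.mulLeft_apply, LinearMap.id_apply] at h1 h2
      have hab : a ≠ b := fun h => hoo (by rw [h])
      have : (a - b) * x = 0 := by rw [sub_mul, h1, ← h2, sub_self]
      rcases mul_eq_zero.1 this with h | h
      · exact absurd (sub_eq_zero.1 h) hab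
      · rw [h, map_zero]
  have hle : ∑ o : Option L, (Finset.univ.filter fun h : L × L →ₗ[K] E =>
      Function.Injective h ∧ h ∘ₗ i o ∈ N).card ≤ Φ.card := by
    rw [← Finset.card_biUnion]
    · apply Finset.card_le_card
      intro h
      simp only [Finset.mem_biUnion, Finset.mem_filter, Finset.mem_univ, true_and, hΦ]
      rintro ⟨_, h, _⟩; exact h
    · intro o _ o' _ hoo
      simp only [Function.onFun]
      rw [Finset.disjoint_left]
      intro h hh hh'
      simp only [Finset.mem_filter, Finset.mem_univ, true_and] at hh hh'
      refine hmeet _ hh.2 _ hh'.2 ?_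
      rw [Submodule.disjoint_def]
      rintro _ ⟨x, rfl⟩ ⟨y, hy⟩
      simp only [LinearMap.comp_apply] at hy ⊢
      rw [hdis o o' hoo x y (hh.1 hy.symm), map_zero]
  have hΦpos : 0 < Φ.card := by
    have : finrank K (L × L) = finrank K E := by rw [hE, Module.finrank_prod]; ring
    let e := LinearEquiv.ofFinrankEq (L × L) E this
    exact Finset.card_pos.2 ⟨e.toLinearMap, by simp [hΦ, e.injective]⟩
  have h4 := Nat.mul_le_mul_right I.card hle
  have h5 : ∀ o, (Finset.univ.filter fun h : L × L →ₗ[K] E =>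
      Function.Injective h ∧ h ∘ₗ i o ∈ N).card * I.card = N.card * Φ.card := by
    intro o
    have := fiber_count (i o) (hi o) N hN
    convert this
  rw [Finset.sum_mul, Finset.sum_congr rfl (fun o _ => h5 o)] at h4
  rw [Finset.sum_const, Finset.card_univ, Fintype.card_option, smul_eq_mul] at h4
  refine Nat.le_of_mul_le_mul_left ?_ hΦpos
  calc _ = _ := by ring
    _ ≤ _ := h4

/-- tuple version -/
lemma ekr_tuples {K E : Type*} [Field K] [Fintype K] [AddCommGroup E] [Module K E]
    [FiniteDimensional K E] (t : ℕ) (ht : 1 ≤ t) (hE : finrank K E = 2 * t)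
    (N : Set (Fin t → E)) (hN : ∀ x ∈ N, LinearIndependent K x)
    (hmeet : ∀ x ∈ N, ∀ y ∈ N,
      ¬ Disjoint (Submodule.span K (Set.range x)) (Submodule.span K (Set.range y))) :
    N.ncard * (Fintype.card K ^ t + 1) ≤
      {x : Fin t → E | LinearIndependent K x}.ncard := by
  classical
  obtain ⟨p, hp⟩ := CharP.exists K
  have : Fact p.Prime := ⟨CharP.char_is_prime K p⟩
  have : NeZero t := ⟨by omega⟩
  let L := FiniteField.Extension K p t
  let : Fintype L := Fintype.ofFinite L
  have : Finite E := Module.finite_of_finite K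
  have hL : finrank K L = t := FiniteField.finrank_extension K p t
  have hLc : Fintype.card L = Fintype.card K ^ t := by
    rw [Fintype.card_eq_nat_card, FiniteField.natCard_extension, Fintype.card_eq_nat_card]
  have : Finite (L →ₗ[K] E) := Module.finite_of_finite K
  have : Finite (L × L →ₗ[K] E) := Module.finite_of_finite K
  let : Fintype (L →ₗ[K] E) := Fintype.ofFinite _
  let : Fintype (L × L →ₗ[K] E) := Fintype.ofFinite _
  let b : Basis (Fin t) K L := Module.finBasisOfFinrankEq K L hL
  let c : (Fin t → E) ≃ₗ[K] (L →ₗ[K] E) := b.constr K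
  have hrange : ∀ x, LinearMap.range (c x) = Submodule.span K (Set.range x) := fun x =>
    b.constr_range K
  have hinj : ∀ x, Function.Injective (c x) ↔ LinearIndependent K x := by
    intro x
    have hx : x = (c x) ∘ b := by ext i; simp [c]
    constructor
    · intro h
      rw [hx]
      exact b.linearIndependent.map' _ (LinearMap.ker_eq_bot.2 h)
    · intro h
      rw [← LinearMap.ker_eq_bot, LinearMap.ker_eq_bot']
      intro l hl
      have hl' : ∑ i, b.repr l i • x i = 0 := by
        rw [← hl]
        exact (b.constr_apply_fintype K x l).symm
      have := Fintype.linearIndependent_iff.1 h _ hl'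
      apply b.repr.injective
      ext i
      simpa using this i
  have := ekr_maps (K := K) (L := L) (E := E) (by rw [hE, hL]) (N.toFinite.toFinset.image c)
    (by
      intro f hf
      simp only [Finset.mem_image, Set.Finite.mem_toFinset] at hf
      obtain ⟨x, hx, rfl⟩ := hf
      exact (hinj x).2 (hN x hx))
    (by
      intro f hf g hg
      simp only [Finset.mem_image, Set.Finite.mem_toFinset] at hf hg
      obtain ⟨x, hx, rfl⟩ := hf
      obtain ⟨y, hy, rfl⟩ := hg
      rw [hrange, hrange]
      exact hmeet x hx y hy)
  rw [Finset.card_image_of_injective _ c.injective, hLc] at this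
  rw [Set.ncard_eq_toFinset_card N]
  refine this.trans (le_of_eq ?_)
  rw [Set.ncard_eq_toFinset_card _ (Set.toFinite _)]
  symm
  refine Finset.card_bij (fun x _ => c x) ?_ ?_ ?_
  · intro x hx
    simpa [hinj] using hx
  · intro x _ y _ h
    exact c.injective h
  · intro f hf
    refine ⟨c.symm f, ?_, by simp⟩
    have := hinj (c.symm f)
    simp at this hf ⊢
    exact this.1 hf

lemma ncard_tuples_in {K V : Type*} [Field K] [Fintype K] [AddCommGroup V] [Module K V]
    [FiniteDimensional K V] (t : ℕ) (G : Submodule K V) (N : Set (Fin t → V))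
    (hN : ∀ x ∈ N, ∀ i, x i ∈ G) :
    {y : Fin t → G | (fun i => (y i : V)) ∈ N}.ncard = N.ncard := by
  have : (fun (y : Fin t → G) i => (y i : V)) '' {y : Fin t → G | (fun i => (y i : V)) ∈ N} = N := by
    ext x
    constructor
    · rintro ⟨y, hy, rfl⟩; exact hy
    · intro hx
      exact ⟨fun i => ⟨x i, hN x hx i⟩, hx, rfl⟩
  conv_rhs => rw [← this]
  rw [Set.ncard_image_of_injective]
  intro y z hyz
  ext i
  exact congrFun hyz i

lemma li_coe {K V : Type*} [Field K] [AddCommGroup V] [Module K V]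
    (t : ℕ) (G : Submodule K V) (y : Fin t → G) :
    LinearIndependent K (fun i => (y i : V)) ↔ LinearIndependent K y :=
  LinearMap.linearIndependent_iff G.subtype (v := y) (by simp)

lemma card_li_top {K V : Type*} [Field K] [Fintype K] [AddCommGroup V] [Module K V]
    [FiniteDimensional K V] (t d : ℕ) (hV : finrank K V = d) (htd : t ≤ d) :
    {x : Fin t → V | LinearIndependent K x}.ncard =
      ∏ i ∈ Finset.range t, (Fintype.card K ^ d - Fintype.card K ^ i) := by
  have : Finite V := Module.finite_of_finite K
  subst hV
  rw [← Fin.prod_univ_eq_prod_range (fun i => Fintype.card K ^ finrank K V - Fintype.card K ^ i),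
    ← card_linearIndependent (K := K) (V := V) htd]
  rfl

lemma card_li_sub {K V : Type*} [Field K] [Fintype K] [AddCommGroup V] [Module K V]
    [FiniteDimensional K V] (t d : ℕ) (G : Submodule K V) (hG : finrank K G = d) (htd : t ≤ d) :
    {x : Fin t → V | LinearIndependent K x ∧ ∀ i, x i ∈ G}.ncard =
      ∏ i ∈ Finset.range t, (Fintype.card K ^ d - Fintype.card K ^ i) := by
  rw [← card_li_top (K := K) (V := G) t d hG htd, ← ncard_tuples_in t G _ (fun x hx => hx.2)]
  congr 1
  ext y
  simp [li_coe]

lemma ekr_sub {K V : Type*} [Field K] [Fintype K] [AddCommGroup V] [Module K V]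
    [FiniteDimensional K V] (t : ℕ) (ht : 1 ≤ t) (G : Submodule K V) (hG : finrank K G = 2 * t)
    (N : Set (Fin t → V)) (hN : ∀ x ∈ N, LinearIndependent K x) (hNG : ∀ x ∈ N, ∀ i, x i ∈ G)
    (hmeet : ∀ x ∈ N, ∀ y ∈ N,
      ¬ Disjoint (Submodule.span K (Set.range x)) (Submodule.span K (Set.range y))) :
    N.ncard * (Fintype.card K ^ t + 1) ≤
      ∏ i ∈ Finset.range t, (Fintype.card K ^ (2 * t) - Fintype.card K ^ i) := by
  rw [← card_li_top (K := K) (V := G) t (2 * t) hG (by omega), ← ncard_tuples_in t G N hNG]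
  apply ekr_tuples t ht hG
  · intro y hy
    rw [← li_coe]
    exact hN _ hy
  · intro x hx y hy hd
    refine hmeet _ hx _ hy ?_
    have key : ∀ z : Fin t → G, Submodule.span K (Set.range fun i => (z i : V)) =
        (Submodule.span K (Set.range z)).map G.subtype := by
      intro z
      rw [Submodule.map_span, ← Set.range_comp]
      rfl
    rw [key, key]
    exact Submodule.disjoint_map (f := G.subtype) (Subtype.val_injective) hd

lemma spread_bound {K V : Type*} [Field K] [Fintype K] [AddCommGroup V] [Module K V]
    [FiniteDimensional K V] (t n : ℕ) (hV : finrank K V = n) (A : Submodule K V)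
    (hA : finrank K A = t) (S : Finset (Submodule K V))
    (hS : ∀ G ∈ S, A ≤ G ∧ finrank K G = 2 * t)
    (hp : ∀ G ∈ S, ∀ G' ∈ S, G ≠ G' → G ⊓ G' ≤ A) :
    S.card * (Fintype.card K ^ (2 * t) - Fintype.card K ^ t) ≤
      Fintype.card K ^ n - Fintype.card K ^ t := by
  classical
  have : Finite V := Module.finite_of_finite K
  let : Fintype V := Fintype.ofFinite V
  have hc : ∀ G : Submodule K V, (Finset.univ.filter fun v => v ∈ G).card =
      Fintype.card K ^ finrank K G := by
    intro G
    rw [← Module.card_eq_pow_finrank (K := K) (V := G), Fintype.card_subtype]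
  have hd : ∀ G : Submodule K V, A ≤ G → (Finset.univ.filter fun v => v ∈ G ∧ v ∉ A).card =
      Fintype.card K ^ finrank K G - Fintype.card K ^ t := by
    intro G hG
    rw [← hA, ← hc, ← hc, ← Finset.card_sdiff_of_subset]
    · congr 1
      ext v; simp
    · intro v; simp; exact fun h => hG h
  have h1 := hd ⊤ le_top
  rw [finrank_top, hV] at h1
  rw [← h1, ← Finset.sum_const_nat (s := S)
    (f := fun G => (Finset.univ.filter fun v => v ∈ G ∧ v ∉ A).card)]
  · rw [← Finset.card_biUnion]
    · apply Finset.card_le_card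
      intro v
      simp
    · intro G hG G' hG' hne
      simp only [Function.onFun]
      rw [Finset.disjoint_left]
      intro v hv hv'
      simp at hv hv'
      exact hv.2 (hp G hG G' hG' hne ⟨hv.1, hv'.1⟩)
  · intro G hG
    rw [hd G (hS G hG).1, (hS G hG).2]

lemma uncovered_bound {K V : Type*} [Field K] [Fintype K] [AddCommGroup V] [Module K V]
    [FiniteDimensional K V] (k n : ℕ) (hV : finrank K V = n) (G W : Submodule K V)
    (hG : finrank K G = 2 * (k + 1)) (hW : finrank K W = k + 2) (hWG : W ≤ G) :
    (Fintype.card K ^ (2 * k + 1)) ^ k *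
      (Fintype.card K ^ n - Fintype.card K ^ (2 * (k + 1))) ≤
    {x : Fin (k + 1) → V | LinearIndependent K x ∧ (∀ i : Fin k, x i.castSucc ∈ G) ∧
      G ≤ W ⊔ Submodule.span K (Set.range fun i : Fin k => x i.castSucc) ∧
      x (Fin.last k) ∉ G}.ncard := by
  classical
  have : Finite V := Module.finite_of_finite K
  let : Fintype V := Fintype.ofFinite V
  obtain ⟨C', hC'⟩ := Submodule.exists_isCompl W
  obtain ⟨C, hCG, hCW, hCWG⟩ : ∃ C : Submodule K V, C ≤ G ∧ C ⊓ W = ⊥ ∧ C ⊔ W = G := by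
    refine ⟨C' ⊓ G, inf_le_right, ?_, ?_⟩
    · rw [eq_bot_iff, ← hC'.inf_eq_bot]
      exact le_inf inf_le_right (inf_le_left.trans inf_le_left)
    · rw [sup_comm, ← sup_inf_assoc_of_le _ hWG, hC'.sup_eq_top, top_inf_eq]
  have hC : finrank K C = k := by
    have := Submodule.finrank_sup_add_finrank_inf_eq C W
    rw [hCW, hCWG, finrank_bot, hG, hW] at this
    omega
  have hzero : ∀ c ∈ C, ∀ w ∈ W, c + w = 0 → c = 0 := by
    intro c hc w hw h
    have : c ∈ C ⊓ W := ⟨hc, by rw [eq_neg_of_add_eq_zero_left h]; exact W.neg_mem hw⟩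
    rw [hCW] at this
    simpa using this
  let T := {y : Fin k → C // LinearIndependent K y} × (Fin k → W) × {v : V // v ∉ G}
  let f : T → (Fin (k + 1) → V) := fun p =>
    Fin.snoc (α := fun _ => V) (fun i => (p.1.1 i : V) + (p.2.1 i : V)) p.2.2.1
  have hf1 : ∀ p i, f p (Fin.castSucc i) = (p.1.1 i : V) + (p.2.1 i : V) := by
    intro p i; simp [f]
  have hf2 : ∀ p, f p (Fin.last k) = p.2.2.1 := by
    intro p; simp [f]
  have hmem : ∀ (p : T) i, (p.1.1 i : V) + (p.2.1 i : V) ∈ G := fun p i =>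
    G.add_mem (hCG (p.1.1 i).2) (hWG (p.2.1 i).2)
  have hfinj : Function.Injective f := by
    intro p p' h
    have e2 : p.2.2 = p'.2.2 := by
      apply Subtype.ext
      rw [← hf2, ← hf2, h]
    have e0 : ∀ i, (p.1.1 i : V) = p'.1.1 i ∧ (p.2.1 i : V) = p'.2.1 i := by
      intro i
      have hi := congrFun h (Fin.castSucc i)
      rw [hf1, hf1] at hi
      have h0 : ((p.1.1 i : V) - p'.1.1 i) = 0 := by
        refine hzero _ (C.sub_mem (p.1.1 i).2 (p'.1.1 i).2) ((p.2.1 i : V) - p'.2.1 i)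
          (W.sub_mem (p.2.1 i).2 (p'.2.1 i).2) ?_
        rw [sub_add_sub_comm, hi, sub_self]
      have h0' := sub_eq_zero.1 h0
      refine ⟨h0', ?_⟩
      rw [h0'] at hi
      exact add_left_cancel hi
    refine Prod.ext (Subtype.ext (funext fun i => Subtype.ext (e0 i).1))
      (Prod.ext (funext fun i => Subtype.ext (e0 i).2) e2)
  have hcardT : (Fintype.card K ^ (2 * k + 1)) ^ k *
      (Fintype.card K ^ n - Fintype.card K ^ (2 * (k + 1))) ≤ Nat.card T := by
    have hc1 : Nat.card {y : Fin k → C // LinearIndependent K y} =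
        ∏ i ∈ Finset.range k, (Fintype.card K ^ k - Fintype.card K ^ i) :=
      card_li_top (K := K) (V := C) k k hC le_rfl
    have hc2 : Nat.card (Fin k → W) = (Fintype.card K ^ (k + 2)) ^ k := by
      rw [Nat.card_eq_fintype_card, Fintype.card_fun, Fintype.card_fin,
        Module.card_eq_pow_finrank (K := K), hW]
    have hc3 : Nat.card {v : V // v ∉ G} =
        Fintype.card K ^ n - Fintype.card K ^ (2 * (k + 1)) := by
      rw [Nat.card_eq_fintype_card, Fintype.card_subtype_compl,
        Module.card_eq_pow_finrank (K := K) (V := V), hV]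
      have := Module.card_eq_pow_finrank (K := K) (V := G)
      rw [hG] at this
      rw [← this]
    rw [Nat.card_prod, Nat.card_prod, hc1, hc2, hc3, ← mul_assoc]
    apply Nat.mul_le_mul_right
    rcases Nat.eq_zero_or_pos k with rfl | hk
    · simp
    have hq : 2 ≤ Fintype.card K := Fintype.one_lt_card
    have h1 : ∏ i ∈ Finset.range k, Fintype.card K ^ (k - 1) ≤
        ∏ i ∈ Finset.range k, (Fintype.card K ^ k - Fintype.card K ^ i) := by
      apply Finset.prod_le_prod'
      intro i hi
      have hi' := Finset.mem_range.1 hi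
      have h2 : Fintype.card K ^ i ≤ Fintype.card K ^ (k - 1) :=
        Nat.pow_le_pow_right (by omega) (by omega)
      have h3 : Fintype.card K ^ k = Fintype.card K ^ (k - 1) * Fintype.card K := by
        rw [← pow_succ]; congr 1; omega
      have h4 : Fintype.card K ^ (k - 1) * 2 ≤ Fintype.card K ^ (k - 1) * Fintype.card K :=
        Nat.mul_le_mul_left _ hq
      omega
    rw [Finset.prod_const, Finset.card_range] at h1
    refine le_trans (le_of_eq ?_) (Nat.mul_le_mul_right _ h1)
    rw [← mul_pow, ← pow_add]
    congr 2
    omega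
  refine hcardT.trans ?_
  rw [← Set.ncard_univ T, ← Set.ncard_image_of_injective _ hfinj]
  apply Set.ncard_le_ncard _ (Set.toFinite _)
  rintro _ ⟨p, -, rfl⟩
  simp only [Set.mem_setOf_eq, hf1, hf2]
  have hsp : Submodule.span K (Set.range fun i => (p.1.1 i : V) + (p.2.1 i : V)) ≤ G := by
    rw [Submodule.span_le]
    rintro _ ⟨i, rfl⟩
    exact hmem p i
  refine ⟨?_, fun i => hmem p i, ?_, p.2.2.2⟩
  · simp only [f]
    rw [linearIndependent_finSnoc]
    refine ⟨?_, fun h => p.2.2.2 (hsp h)⟩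
    rw [Fintype.linearIndependent_iff]
    intro g hg
    have hli := (li_coe k C p.1.1).2 p.1.2
    rw [Fintype.linearIndependent_iff] at hli
    apply hli
    simp only [smul_add, Finset.sum_add_distrib] at hg
    exact hzero _ (C.sum_mem fun i _ => C.smul_mem _ (p.1.1 i).2) _
      (W.sum_mem fun i _ => W.smul_mem _ (p.2.1 i).2) hg
  · have hCspan : C = Submodule.span K (Set.range fun i => (p.1.1 i : V)) := by
      symm
      apply Submodule.eq_of_le_of_finrank_eq
      · rw [Submodule.span_le]
        rintro _ ⟨i, rfl⟩
        exact (p.1.1 i).2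
      · rw [finrank_span_eq_card ((li_coe k C p.1.1).2 p.1.2), hC, Fintype.card_fin]
    refine hCWG.ge.trans (sup_le ?_ le_sup_left)
    refine hCspan.le.trans ?_
    rw [Submodule.span_le]
    rintro _ ⟨i, rfl⟩
    have : (p.1.1 i : V) = -(p.2.1 i : V) + ((p.1.1 i : V) + (p.2.1 i : V)) := by abel
    simp only [SetLike.mem_coe]
    rw [this]
    exact Submodule.add_mem_sup (W.neg_mem (p.2.1 i).2) (Submodule.subset_span ⟨i, rfl⟩)

lemma arith1 (q n k : ℕ) (hq : 2 ≤ q) (hn : 2 * (k + 1) + 1 ≤ n) :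
    ((∏ i ∈ Finset.range (k + 1), (q ^ (2 * (k + 1)) - q ^ i) : ℕ) : ℚ) / ((q : ℚ) ^ (k + 1) + 1) *
      (((q : ℚ) ^ (k + 1) - 1) / ((q : ℚ) ^ (n - (k + 1)) - 1)) <
    (((q ^ (2 * k + 1)) ^ k * (q ^ n - q ^ (2 * (k + 1))) : ℕ) : ℚ) := by
  have h1 : (((q ^ (2 * k + 1)) ^ k * q ^ (2 * (k + 1)) : ℕ) : ℚ) ≤
      (((q ^ (2 * k + 1)) ^ k * (q ^ n - q ^ (2 * (k + 1))) : ℕ) : ℚ) := by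
    norm_cast
    apply Nat.mul_le_mul_left
    have : q ^ (2 * (k + 1)) * q ≤ q ^ n := by
      rw [← pow_succ]; exact Nat.pow_le_pow_right (by omega) hn
    have h2 := Nat.mul_le_mul_left (q ^ (2 * (k + 1))) hq
    omega
  refine lt_of_lt_of_le ?_ h1
  have h2 : ((∏ i ∈ Finset.range (k + 1), (q ^ (2 * (k + 1)) - q ^ i) : ℕ) : ℚ) ≤
      ((q ^ (2 * (k + 1))) ^ (k + 1) : ℕ) := by
    norm_cast
    calc _ ≤ ∏ i ∈ Finset.range (k + 1), q ^ (2 * (k + 1)) :=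
          Finset.prod_le_prod' fun i _ => Nat.sub_le _ _
      _ = _ := by simp
  have hq1 : (1 : ℚ) < q := by exact_mod_cast hq
  have hp : (1 : ℚ) < (q : ℚ) ^ (k + 1) := one_lt_pow₀ hq1 (by omega)
  have hpn : (q : ℚ) ^ (k + 1) ≤ (q : ℚ) ^ (n - (k + 1)) :=
    pow_le_pow_right₀ hq1.le (by omega)
  have h3 : (((q : ℚ) ^ (k + 1) - 1) / ((q : ℚ) ^ (n - (k + 1)) - 1)) ≤ 1 := by
    rw [div_le_one (by linarith)]; linarith
  have h30 : 0 ≤ (((q : ℚ) ^ (k + 1) - 1) / ((q : ℚ) ^ (n - (k + 1)) - 1)) :=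
    div_nonneg (by linarith) (by linarith)
  have h4 : ((q ^ (2 * (k + 1))) ^ (k + 1) : ℕ) / ((q : ℚ) ^ (k + 1) + 1) <
      (((q ^ (2 * k + 1)) ^ k * q ^ (2 * (k + 1)) : ℕ) : ℚ) := by
    rw [div_lt_iff₀ (by linarith)]
    have h5 : ((q ^ (2 * (k + 1))) ^ (k + 1) : ℕ) ≤
        ((q ^ (2 * k + 1)) ^ k * q ^ (2 * (k + 1)) : ℕ) * q ^ (k + 1) := by
      rw [← pow_mul, ← pow_mul, ← pow_add, ← pow_add]
      apply Nat.pow_le_pow_right (by omega)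
      nlinarith
    have h6 : (((q ^ (2 * (k + 1))) ^ (k + 1) : ℕ) : ℚ) ≤
        (((q ^ (2 * k + 1)) ^ k * q ^ (2 * (k + 1)) : ℕ) : ℚ) * (q : ℚ) ^ (k + 1) := by
      exact_mod_cast h5
    have h7 : (0 : ℚ) < (((q ^ (2 * k + 1)) ^ k * q ^ (2 * (k + 1)) : ℕ) : ℚ) := by
      have : 0 < q := by omega
      positivity
    linarith
  calc _ ≤ ((∏ i ∈ Finset.range (k + 1), (q ^ (2 * (k + 1)) - q ^ i) : ℕ) : ℚ) / ((q : ℚ) ^ (k + 1) + 1) * 1 := by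
        apply mul_le_mul_of_nonneg_left h3
        apply div_nonneg (by positivity) (by linarith)
    _ ≤ ((q ^ (2 * (k + 1))) ^ (k + 1) : ℕ) / ((q : ℚ) ^ (k + 1) + 1) := by
        rw [mul_one]
        exact div_le_div_of_nonneg_right h2 (by linarith)
    _ < _ := h4

lemma tele (q n t : ℕ) (hn : t ≤ n) :
    (∏ i ∈ Finset.range t, ((q : ℚ) ^ (n - i) - 1)) * ((q : ℚ) ^ (n - t) - 1) =
      ((q : ℚ) ^ n - 1) * ∏ i ∈ Finset.range t, ((q : ℚ) ^ (n - 1 - i) - 1) := by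
  rw [← Finset.prod_range_succ (fun i => ((q : ℚ) ^ (n - i) - 1)), Finset.prod_range_succ']
  rw [mul_comm]
  congr 1
  apply Finset.prod_congr rfl
  intro i _
  congr 2
  omega

lemma cast_prod (q n t : ℕ) (hq : 1 ≤ q) (hn : t ≤ n) :
    ((∏ i ∈ Finset.range t, (q ^ n - q ^ i) : ℕ) : ℚ) =
      (∏ i ∈ Finset.range t, (q : ℚ) ^ i) * ∏ i ∈ Finset.range t, ((q : ℚ) ^ (n - i) - 1) := by
  rw [← Finset.prod_mul_distrib, Nat.cast_prod]
  apply Finset.prod_congr rfl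
  intro i hi
  have hi' := Finset.mem_range.1 hi
  rw [Nat.cast_sub (Nat.pow_le_pow_right hq (by omega)), mul_sub, ← pow_add]
  rw [show i + (n - i) = n by omega]
  simp

lemma arith2 (q n t : ℕ) (hq : 2 ≤ q) (ht : 1 ≤ t) (hn : 2 * t + 1 ≤ n) :
    GaussQ q (n - 1) t / GaussQ q (2 * t - 1) t *
      (((∏ i ∈ Finset.range t, (q ^ (2 * t) - q ^ i) : ℕ) : ℚ) / ((q : ℚ) ^ t + 1) *
        ((q : ℚ) ^ t + ((q : ℚ) ^ t - 1) / ((q : ℚ) ^ (n - t) - 1))) =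
    ((∏ i ∈ Finset.range t, (q ^ n - q ^ i) : ℕ) : ℚ) := by
  have hq1 : (1 : ℚ) < q := by exact_mod_cast hq
  have hpos : ∀ m, m ≠ 0 → (q : ℚ) ^ m - 1 ≠ 0 := fun m hm => by
    have := one_lt_pow₀ hq1 hm
    linarith
  rw [cast_prod q n t (by omega) (by omega), cast_prod q (2 * t) t (by omega) (by omega)]
  have t1 := tele q n t (by omega)
  have t2 := tele q (2 * t) t (by omega)
  unfold GaussQ
  rw [Finset.prod_div_distrib, Finset.prod_div_distrib]
  rw [show 2 * t - t = t by omega] at t2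
  set P := ∏ i ∈ Finset.range t, (q : ℚ) ^ i
  set A := ∏ i ∈ Finset.range t, ((q : ℚ) ^ (n - i) - 1)
  set A' := ∏ i ∈ Finset.range t, ((q : ℚ) ^ (n - 1 - i) - 1)
  set B := ∏ i ∈ Finset.range t, ((q : ℚ) ^ (2 * t - i) - 1)
  have hB' : ∏ i ∈ Finset.range t, ((q : ℚ) ^ (2 * t - 1 - i) - 1) ≠ 0 := by
    rw [Finset.prod_ne_zero_iff]
    intro i hi
    have := Finset.mem_range.1 hi
    exact hpos _ (by omega)
  have hD : ∏ i ∈ Finset.range t, ((q : ℚ) ^ (t - i) - 1) ≠ 0 := by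
    rw [Finset.prod_ne_zero_iff]
    intro i hi
    have := Finset.mem_range.1 hi
    exact hpos _ (by omega)
  set B' := ∏ i ∈ Finset.range t, ((q : ℚ) ^ (2 * t - 1 - i) - 1)
  set D := ∏ i ∈ Finset.range t, ((q : ℚ) ^ (t - i) - 1)
  have e1 : (q : ℚ) ^ n = (q : ℚ) ^ t * (q : ℚ) ^ (n - t) := by
    rw [← pow_add]; congr 1; omega
  have e2 : (q : ℚ) ^ (2 * t) = (q : ℚ) ^ t * (q : ℚ) ^ t := by
    rw [← pow_add]; congr 1; omega
  have n1 := hpos t (by omega)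
  have n2 := hpos (n - t) (by omega)
  have n3 : (q : ℚ) ^ t + 1 ≠ 0 := by positivity
  rw [e1] at t1
  rw [e2] at t2
  set x := (q : ℚ) ^ t
  set y := (q : ℚ) ^ (n - t)
  have t2' : B = (x + 1) * B' := by
    apply mul_right_cancel₀ n1
    rw [t2]; ring
  rw [t2']
  have t1' : A = (x * y - 1) * A' / (y - 1) := by
    rw [eq_div_iff n2]; exact t1
  rw [t1']
  field_simp
  ring

lemma main_aux (q n k : ℕ) (K : Type*) [Field K] [Fintype K] (hK : Fintype.card K = q)
    (V : Type*) [AddCommGroup V] [Module K V] [FiniteDimensional K V]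
    (hV : Module.finrank K V = n) (hn : 2 * (k + 1) + 1 ≤ n)
    (F : Set (Submodule K V)) (hdim : ∀ A ∈ F, Module.finrank K A = 2 * (k + 1))
    (hcf : IsCoverFree F)
    (hcard : (F.ncard : ℚ) = GaussQ q (n - 1) (k + 1) / GaussQ q (2 * (k + 1) - 1) (k + 1)) 
    (A : Submodule K V) (hA : Module.finrank K A = k + 1) :
      {G ∈ F | A ≤ G}.ncard = 1 ∨
      ({G ∈ F | A ≤ G}.ncard : ℚ) = ((q : ℚ) ^ (n - (k + 1)) - 1) / ((q : ℚ) ^ (k + 1) - 1) := by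
  classical
  have hfin : Finite V := Module.finite_of_finite K
  let : Fintype V := Fintype.ofFinite V
  have hq : 2 ≤ q := hK ▸ Fintype.one_lt_card
  have hq1 : (1 : ℚ) < q := by exact_mod_cast hq
  have hp1 : (1 : ℚ) < (q : ℚ) ^ (k + 1) := one_lt_pow₀ hq1 (by omega)
  have hp2 : (q : ℚ) ^ (k + 1) ≤ (q : ℚ) ^ (n - (k + 1)) :=
    pow_le_pow_right₀ hq1.le (by omega)
  have hFfin : F.Finite := Set.toFinite F
  set Fs : Finset (Submodule K V) := hFfin.toFinset with hFs
  have hmF : ∀ G, G ∈ Fs ↔ G ∈ F := fun G => hFfin.mem_toFinset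
  set X : Finset (Fin (k + 1) → V) := Finset.univ.filter fun x => LinearIndependent K x with hX
  set μ : ℚ := ((q : ℚ) ^ (k + 1) - 1) / ((q : ℚ) ^ (n - (k + 1)) - 1) with hμ
  have hμ0 : 0 < μ := div_pos (by linarith) (by linarith)
  have hμ1 : μ ≤ 1 := by rw [hμ, div_le_one (by linarith)]; linarith
  let bad : Submodule K V → Prop := fun G => ∃ G' ∈ F, G' ≠ G ∧ k + 2 ≤ finrank K (G ⊓ G' : Submodule K V)
  let inn : (Fin (k + 1) → V) → Submodule K V → Prop := fun x G => ∀ i, x i ∈ G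
  let own : (Fin (k + 1) → V) → Submodule K V → Prop := fun x G =>
    inn x G ∧ ∀ G' ∈ F, inn x G' → G' = G
  let unc : (Fin (k + 1) → V) → Submodule K V → Prop := fun x G =>
    (∀ G' ∈ F, ¬ inn x G') ∧ ∀ G' ∈ F, (∀ i : Fin k, x i.castSucc ∈ G') → G' = G
  let unc' : (Fin (k + 1) → V) → Submodule K V → Prop := fun x G =>
    (∀ i : Fin k, x i.castSucc ∈ G) ∧ unc x G
  let φ : Submodule K V → (Fin (k + 1) → V) → ℚ := fun G x =>
    if own x G then 1 else if bad G then (if unc' x G then 1 else 0)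
      else (if inn x G then μ else 0)
  have hspan : ∀ x G, inn x G → Submodule.span K (Set.range x) ≤ G := by
    intro x G h
    rw [Submodule.span_le]
    rintro _ ⟨i, rfl⟩
    exact h i
  have hrank : ∀ x : Fin (k + 1) → V, LinearIndependent K x → finrank K (Submodule.span K (Set.range x)) = k + 1 := by
    intro x hx
    rw [finrank_span_eq_card hx, Fintype.card_fin]
  have heqF : ∀ G ∈ F, ∀ G' ∈ F, G ≤ G' → G = G' := by
    intro G hG G' hG' h
    exact Submodule.eq_of_le_of_finrank_eq h (by rw [hdim G hG, hdim G' hG'])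
  -- spread part
  have hsp : ∀ x ∈ X, μ * ((Fs.filter fun G => ¬ bad G ∧ inn x G).card : ℚ) ≤ 1 := by
    intro x hx
    have hx' : LinearIndependent K x := by simpa [hX] using hx
    have := spread_bound (K := K) (k + 1) n hV (Submodule.span K (Set.range x)) (hrank x hx')
      (Fs.filter fun G => ¬ bad G ∧ inn x G) ?_ ?_
    · rw [hK] at this
      have h1 : q ^ (k + 1) ≤ q ^ (2 * (k + 1)) := Nat.pow_le_pow_right (by omega) (by omega)
      have h2 : q ^ (k + 1) ≤ q ^ n := Nat.pow_le_pow_right (by omega) (by omega)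
      have h3 := (Nat.cast_le (α := ℚ)).2 this
      rw [Nat.cast_mul, Nat.cast_sub h1, Nat.cast_sub h2] at h3
      push_cast at h3
      have e1 : (q : ℚ) ^ n = (q : ℚ) ^ (k + 1) * (q : ℚ) ^ (n - (k + 1)) := by
        rw [← pow_add]; congr 1; omega
      have e2 : (q : ℚ) ^ (2 * (k + 1)) = (q : ℚ) ^ (k + 1) * (q : ℚ) ^ (k + 1) := by
        rw [← pow_add]; congr 1; omega
      rw [e1, e2] at h3
      rw [hμ, div_mul_eq_mul_div, div_le_one (by linarith)]
      have hpos : (0 : ℚ) < (q : ℚ) ^ (k + 1) := by linarith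
      refine le_of_mul_le_mul_left ?_ hpos
      linarith
    · intro G hG
      simp only [Finset.mem_filter, hmF] at hG
      exact ⟨hspan x G hG.2.2, hdim G hG.1⟩
    · intro G hG G' hG' hne
      simp only [Finset.mem_filter, hmF] at hG hG'
      have hle : Submodule.span K (Set.range x) ≤ G ⊓ G' :=
        le_inf (hspan x G hG.2.2) (hspan x G' hG'.2.2)
      have : finrank K (G ⊓ G' : Submodule K V) < k + 2 := by
        by_contra h
        exact hG.2.1 ⟨G', hG'.1, hne.symm, not_lt.1 h⟩
      exact (Submodule.eq_of_le_of_finrank_le hle (by rw [hrank x hx']; omega)).ge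
  have claim0 : ∀ x, (∃ G ∈ F, inn x G) → (¬ ∃ G ∈ F, own x G) →
      ∑ G ∈ Fs, φ G x = μ * ((Fs.filter fun G => ¬ bad G ∧ inn x G).card : ℚ) := by
    rintro x ⟨G0, hG0, hin⟩ hno
    rw [Finset.card_filter, Nat.cast_sum, Finset.mul_sum]
    apply Finset.sum_congr rfl
    intro G hG
    have h1 : ¬ own x G := fun h => hno ⟨G, (hmF G).1 hG, h⟩
    have h2 : ¬ unc' x G := fun h => h.2.1 G0 hG0 hin
    simp only [φ, h1, h2, if_false]
    by_cases hb : bad G <;> by_cases hi : inn x G <;> simp [hb, hi]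
  have claim00 : ∀ x, (¬ ∃ G ∈ F, inn x G) →
      ∑ G ∈ Fs, φ G x = ((Fs.filter fun G => bad G ∧ unc' x G).card : ℚ) := by
    intro x hno
    rw [Finset.card_filter, Nat.cast_sum]
    apply Finset.sum_congr rfl
    intro G hG
    have h0 : ¬ inn x G := fun h => hno ⟨G, (hmF G).1 hG, h⟩
    have h1 : ¬ own x G := fun h => h0 h.1
    simp only [φ, h1, h0, if_false]
    by_cases hb : bad G <;> by_cases hi : unc' x G <;> simp [hb, hi]
  have claim1 : ∀ x ∈ X, ∑ G ∈ Fs, φ G x ≤ 1 := by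
    intro x hx
    by_cases hc : ∃ G ∈ F, inn x G
    · by_cases ho : ∃ G ∈ F, own x G
      · obtain ⟨G, hG, hoG⟩ := ho
        rw [Finset.sum_eq_single G]
        · simp [φ, hoG]
        · intro G' hG' hne
          have h0 : ¬ inn x G' := fun h => hne (hoG.2 G' ((hmF _).1 hG') h)
          have h1 : ¬ own x G' := fun h => h0 h.1
          have h2 : ¬ unc' x G' := fun h => h.2.1 G hG hoG.1
          simp [φ, h0, h1, h2]
        · intro h; exact absurd ((hmF G).2 hG) h
      · rw [claim0 x hc ho]
        exact hsp x hx
    · rw [claim00 x hc]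
      have : (Fs.filter fun G => bad G ∧ unc' x G).card ≤ 1 := by
        rw [Finset.card_le_one]
        intro G hG G' hG'
        simp only [Finset.mem_filter, hmF] at hG hG'
        exact hG'.2.2.2.2 G hG.1 hG.2.2.1
      exact_mod_cast this
  set D : ℕ := ∏ i ∈ Finset.range (k + 1), (q ^ (2 * (k + 1)) - q ^ i) with hD
  set c : ℚ := (D : ℚ) / ((q : ℚ) ^ (k + 1) + 1) * ((q : ℚ) ^ (k + 1) + μ) with hc
  have hON : ∀ G ∈ F, (X.filter fun x => own x G).card + (X.filter fun x => inn x G ∧ ¬ own x G).card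
      = D := by
    intro G hG
    have h1 := card_li_sub (K := K) (k + 1) (2 * (k + 1)) G (hdim G hG) (by omega)
    rw [hK] at h1
    rw [hD, ← h1, Set.ncard_eq_toFinset_card', ← Finset.card_union_of_disjoint]
    · congr 1
      ext x
      simp only [Finset.mem_union, Finset.mem_filter, hX, Finset.mem_univ, true_and,
        Set.mem_toFinset, Set.mem_setOf_eq]
      constructor
      · rintro (h | h)
        · exact ⟨h.1, h.2.1⟩
        · exact ⟨h.1, h.2.1⟩
      · intro h
        by_cases ho : own x G
        · exact Or.inl ⟨h.1, ho⟩
        · exact Or.inr ⟨h.1, h.2, ho⟩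
    · rw [Finset.disjoint_left]
      intro x hx hx'
      exact (Finset.mem_filter.1 hx').2.2 (Finset.mem_filter.1 hx).2
  have hN : ∀ G ∈ F, (X.filter fun x => inn x G ∧ ¬ own x G).card * (q ^ (k + 1) + 1) ≤ D := by
    intro G hG
    have := ekr_sub (K := K) (k + 1) (by omega) G (hdim G hG)
      {x | LinearIndependent K x ∧ inn x G ∧ ¬ own x G} (fun x hx => hx.1) (fun x hx => hx.2.1) ?_
    · rw [hK, Set.ncard_eq_toFinset_card'] at this
      convert this using 3
      ext x
      simp [hX]
    · rintro x ⟨hx, hxG, hxo⟩ y ⟨hy, hyG, hyo⟩ hdj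
      have hsup : Submodule.span K (Set.range x) ⊔ Submodule.span K (Set.range y) = G := by
        apply Submodule.eq_of_le_of_finrank_eq (sup_le (hspan x G hxG) (hspan y G hyG))
        have := Submodule.finrank_sup_add_finrank_inf_eq (Submodule.span K (Set.range x))
          (Submodule.span K (Set.range y))
        rw [hdj.eq_bot, finrank_bot, hrank x hx, hrank y hy] at this
        rw [hdim G hG]; omega
      have ex : ∀ z, inn z G → ¬ own z G → ∃ G' ∈ F, inn z G' ∧ G' ≠ G := by
        intro z hz hzo
        by_contra hcon
        push Not at hcon
        exact hzo ⟨hz, hcon⟩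
      obtain ⟨G1, hG1, hx1, hne1⟩ := ex x hxG hxo
      obtain ⟨G2, hG2, hy2, hne2⟩ := ex y hyG hyo
      by_cases h12 : G1 = G2
      · subst h12
        apply hne1
        symm
        apply heqF G hG G1 hG1
        rw [← hsup]
        exact sup_le (hspan x G1 hx1) (hspan y G1 hy2)
      · refine hcf ⟨G, G1, G2, hG, hG1, hG2, hne1.symm, hne2.symm, h12, ?_⟩
        conv_lhs => rw [← hsup]
        exact sup_le_sup (le_inf (hspan x G hxG) (hspan x G1 hx1))
          (le_inf (hspan y G hyG) (hspan y G2 hy2))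
  have hU : ∀ G ∈ F, bad G → (D : ℚ) / ((q : ℚ) ^ (k + 1) + 1) * μ <
      ((X.filter fun x => unc' x G).card : ℚ) := by
    rintro G hG ⟨G', hG', hne, hr⟩
    obtain ⟨W, hWle, hW⟩ : ∃ W : Submodule K V, W ≤ G ⊓ G' ∧ finrank K W = k + 2 := by
      obtain ⟨f, hf⟩ := exists_linearIndependent_of_le_finrank hr
      refine ⟨Submodule.span K (Set.range fun i => (f i : V)), ?_, ?_⟩
      · rw [Submodule.span_le]
        rintro _ ⟨i, rfl⟩
        exact (f i).2
      · rw [finrank_span_eq_card ((li_coe _ _ f).2 hf), Fintype.card_fin]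
    have h1 := uncovered_bound (K := K) k n hV G W (hdim G hG) hW (hWle.trans inf_le_left)
    rw [hK] at h1
    refine lt_of_lt_of_le (arith1 q n k hq hn) ?_
    refine le_trans (Nat.cast_le.2 h1) ?_
    rw [Set.ncard_eq_toFinset_card']
    refine Nat.cast_le.2 (Finset.card_le_card ?_)
    intro x
    simp only [Set.mem_toFinset, Set.mem_setOf_eq, Finset.mem_filter, hX, Finset.mem_univ, true_and]
    rintro ⟨hli, hin, hle, hlast⟩
    have honly : ∀ G3 ∈ F, (∀ i : Fin k, x i.castSucc ∈ G3) → G3 = G := by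
      intro G3 hG3 h3
      by_contra hne3
      have hs3 : Submodule.span K (Set.range fun i : Fin k => x i.castSucc) ≤ G ⊓ G3 := by
        rw [Submodule.span_le]
        rintro _ ⟨i, rfl⟩
        exact ⟨hin i, h3 i⟩
      by_cases h23 : G' = G3
      · subst h23
        apply hne
        symm
        apply heqF G hG G' hG'
        exact hle.trans (sup_le (hWle.trans inf_le_right) (hs3.trans inf_le_right))
      · exact hcf ⟨G, G', G3, hG, hG', hG3, hne.symm, fun h => hne3 h.symm, h23,
          hle.trans (sup_le_sup hWle hs3)⟩
    refine ⟨hli, hin, ?_, honly⟩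
    intro G3 hG3 h3
    have := honly G3 hG3 (fun i => h3 _)
    subst this
    exact hlast (h3 _)
  have hNq : ∀ G ∈ F, ((X.filter fun x => inn x G ∧ ¬ own x G).card : ℚ) ≤
      (D : ℚ) / ((q : ℚ) ^ (k + 1) + 1) := by
    intro G hG
    rw [le_div_iff₀ (by linarith)]
    exact_mod_cast hN G hG
  have hONq : ∀ G ∈ F, ((X.filter fun x => own x G).card : ℚ) +
      ((X.filter fun x => inn x G ∧ ¬ own x G).card : ℚ) = (D : ℚ) := by
    intro G hG
    exact_mod_cast hON G hG
  have hDe : (D : ℚ) = (D : ℚ) / ((q : ℚ) ^ (k + 1) + 1) * ((q : ℚ) ^ (k + 1) + 1) := by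
    rw [div_mul_cancel₀]; linarith
  have claim2b : ∀ G ∈ F, bad G → c < ∑ x ∈ X, φ G x := by
    intro G hG hb
    have hs : ∑ x ∈ X, φ G x = ((X.filter fun x => own x G).card : ℚ) +
        ((X.filter fun x => unc' x G).card : ℚ) := by
      rw [Finset.card_filter, Finset.card_filter, Nat.cast_sum, Nat.cast_sum,
        ← Finset.sum_add_distrib]
      apply Finset.sum_congr rfl
      intro x _
      by_cases ho : own x G
      · have : ¬ unc' x G := fun h => h.2.1 G hG ho.1
        simp [φ, ho, this]
      · simp [φ, ho, hb]
    rw [hs]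
    have := hU G hG hb
    have h1 := hNq G hG
    have h2 := hONq G hG
    rw [hc]
    linarith
  have claim2a : ∀ G ∈ F, ¬ bad G → c ≤ ∑ x ∈ X, φ G x := by
    intro G hG hb
    have hs : ∑ x ∈ X, φ G x = ((X.filter fun x => own x G).card : ℚ) +
        μ * ((X.filter fun x => inn x G ∧ ¬ own x G).card : ℚ) := by
      rw [Finset.card_filter, Finset.card_filter, Nat.cast_sum, Nat.cast_sum, Finset.mul_sum,
        ← Finset.sum_add_distrib]
      apply Finset.sum_congr rfl
      intro x _
      by_cases ho : own x G
      · simp [φ, ho]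
      · by_cases hi : inn x G <;> simp [φ, ho, hb, hi]
    rw [hs]
    have h1 := hNq G hG
    have h2 := hONq G hG
    have h3 := mul_le_mul_of_nonneg_left h1 (sub_nonneg.2 hμ1)
    rw [hc]
    linarith
  have claim2 : ∀ G ∈ Fs, c ≤ ∑ x ∈ X, φ G x := by
    intro G hG
    by_cases hb : bad G
    · exact (claim2b G ((hmF G).1 hG) hb).le
    · exact claim2a G ((hmF G).1 hG) hb
  have hXcard : (X.card : ℚ) = ((∏ i ∈ Finset.range (k + 1), (q ^ n - q ^ i) : ℕ) : ℚ) := by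
    have := card_li_top (K := K) (V := V) (k + 1) n hV (by omega)
    rw [hK, Set.ncard_eq_toFinset_card'] at this
    rw [← this]
    congr 2
    ext x
    simp [hX]
  have hFcard : (Fs.card : ℚ) = F.ncard := by
    rw [Set.ncard_eq_toFinset_card F hFfin]
  have htot : (Fs.card : ℚ) * c = X.card := by
    rw [hFcard, hcard, hXcard]
    exact arith2 q n (k + 1) hq (by omega) hn
  have hswap : ∑ G ∈ Fs, ∑ x ∈ X, φ G x = ∑ x ∈ X, ∑ G ∈ Fs, φ G x := Finset.sum_comm
  have hlow : ∑ G ∈ Fs, c ≤ ∑ G ∈ Fs, ∑ x ∈ X, φ G x := Finset.sum_le_sum claim2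
  have hupp : ∑ x ∈ X, ∑ G ∈ Fs, φ G x ≤ ∑ x ∈ X, (1 : ℚ) := Finset.sum_le_sum claim1
  have hcs : ∑ G ∈ Fs, c = ∑ x ∈ X, (1 : ℚ) := by
    simp only [Finset.sum_const, nsmul_eq_mul, mul_one]
    exact htot
  have eq1 : ∀ G ∈ Fs, c = ∑ x ∈ X, φ G x :=
    (Finset.sum_eq_sum_iff_of_le claim2).1 (by linarith)
  have eq2 : ∀ x ∈ X, ∑ G ∈ Fs, φ G x = 1 :=
    (Finset.sum_eq_sum_iff_of_le claim1).1 (by linarith)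
  have nobad : ∀ G ∈ F, ¬ bad G := by
    intro G hG hb
    have := claim2b G hG hb
    have := eq1 G ((hmF G).2 hG)
    linarith
  -- finish
  let b := Module.finBasisOfFinrankEq K A hA
  let x : Fin (k + 1) → V := fun i => (b i : V)
  have hxli : LinearIndependent K x := (li_coe (k + 1) A b).2 b.linearIndependent
  have hxX : x ∈ X := by simp [hX, hxli]
  have hxspan : Submodule.span K (Set.range x) = A := by
    apply Submodule.eq_of_le_of_finrank_eq
    · exact hspan x A (fun i => (b i).2)
    · rw [hrank x hxli, hA]
  have hinn : ∀ G, inn x G ↔ A ≤ G := by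
    intro G
    constructor
    · intro h
      rw [← hxspan]; exact hspan x G h
    · intro h i
      exact h (b i).2
  have hset : {G ∈ F | A ≤ G} = ((Fs.filter fun G => ¬ bad G ∧ inn x G : Finset (Submodule K V)) : Set (Submodule K V)) := by
    ext G
    simp only [Set.mem_setOf_eq, Finset.coe_filter, hmF, hinn]
    constructor
    · rintro ⟨h1, h2⟩; exact ⟨h1, nobad G h1, h2⟩
    · rintro ⟨h1, _, h2⟩; exact ⟨h1, h2⟩
  have hex := eq2 x hxX
  by_cases hcov : ∃ G ∈ F, inn x G
  · by_cases ho : ∃ G ∈ F, own x G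
    · left
      obtain ⟨G, hG, hoG⟩ := ho
      rw [Set.ncard_eq_one]
      refine ⟨G, ?_⟩
      ext G'
      simp only [Set.mem_setOf_eq, Set.mem_singleton_iff]
      constructor
      · rintro ⟨h1, h2⟩
        exact hoG.2 G' h1 ((hinn G').2 h2)
      · rintro rfl
        exact ⟨hG, (hinn _).1 hoG.1⟩
    · right
      rw [claim0 x hcov ho] at hex
      rw [hset, Set.ncard_coe_finset]
      rw [eq_div_iff (by linarith)]
      rw [hμ, div_mul_eq_mul_div, div_eq_one_iff_eq (by linarith)] at hex
      linarith
  · exfalso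
    rw [claim00 x hcov] at hex
    rw [Finset.filter_false_of_mem] at hex
    · simp at hex
    · intro G hG h
      exact nobad G ((hmF G).1 hG) h.1

theorem stmt14 (q n t : ℕ) (K : Type*) [Field K] [Fintype K] (hK : Fintype.card K = q)
    (V : Type*) [AddCommGroup V] [Module K V] [FiniteDimensional K V]
    (hV : Module.finrank K V = n) (ht : 1 ≤ t) (hn : 2 * t + 1 ≤ n)
    (F : Set (Submodule K V)) (hdim : ∀ A ∈ F, Module.finrank K A = 2 * t)
    (hcf : IsCoverFree F)
    (hcard : (F.ncard : ℚ) = GaussQ q (n - 1) t / GaussQ q (2 * t - 1) t) :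
    ∀ A : Submodule K V, Module.finrank K A = t →
      {G ∈ F | A ≤ G}.ncard = 1 ∨
      ({G ∈ F | A ≤ G}.ncard : ℚ) = ((q : ℚ) ^ (n - t) - 1) / ((q : ℚ) ^ t - 1) := by
  intro A hA
  obtain ⟨k, rfl⟩ : ∃ k, t = k + 1 := ⟨t - 1, by omega⟩
  exact main_aux q n k K hK V hV hn F hdim hcf hcard A hA
end

section
/- Let V be an n-dimensional vector space over the finite field 𝔽_q with n ≥ 2t+1 and t ≥ 1, and let F be a cover-free family of 2t-dimensional subspaces of V with |F| = [n-1 choose t]_q / [2t-1 choose t]_q. Then for every F ∈ F, |M_t(F)| = q^t [2t-1 choose t]_q and |N_t(F)| = [2t-1 choose t-1]_q; moreover |Ω| = q^t [n-1 choose t]_q and |Γ| = [n-1 choose t-1]_q, where Ω is the set of t-dimensional subspaces A of V with |F_A| = 1 and Γ is the set of t-dimensional subspaces A of V with |F_A| = (q^{n-t}-1)/(q^t-1). -/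
section Gauss

theorem gauss_R1 (q m k : ℕ) (hq : 2 ≤ q) :
    GaussQ q (m + 1) (k + 1) * ((q : ℚ) ^ (k + 1) - 1) = ((q : ℚ) ^ (m + 1) - 1) * GaussQ q m k := by
  have hq' : (1 : ℚ) < q := by exact_mod_cast hq
  have h : (q : ℚ) ^ (k + 1) - 1 ≠ 0 := by
    have := one_lt_pow₀ hq' (Nat.succ_ne_zero k)
    exact sub_ne_zero.mpr this.ne'
  unfold GaussQ
  rw [Finset.prod_range_succ']
  simp only [Nat.add_sub_add_right, Nat.sub_zero]
  field_simp

theorem gauss_R2 (q m k : ℕ) (hq : 2 ≤ q) :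
    GaussQ q m (k + 1) * ((q : ℚ) ^ (k + 1) - 1) = ((q : ℚ) ^ (m - k) - 1) * GaussQ q m k := by
  have hq' : (1 : ℚ) < q := by exact_mod_cast hq
  have h : (q : ℚ) ^ (k + 1) - 1 ≠ 0 := by
    have := one_lt_pow₀ hq' (Nat.succ_ne_zero k)
    exact sub_ne_zero.mpr this.ne'
  unfold GaussQ
  rw [Finset.prod_div_distrib, Finset.prod_div_distrib, Finset.prod_range_succ,
    Finset.prod_range_succ' (fun i => (q : ℚ) ^ (k + 1 - i) - 1)]
  simp only [Nat.add_sub_add_right, Nat.sub_zero]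
  have h2 : ∏ i ∈ Finset.range k, ((q : ℚ) ^ (k - i) - 1) ≠ 0 := by
    refine Finset.prod_ne_zero_iff.mpr fun i hi => ?_
    have hi := Finset.mem_range.mp hi
    have := one_lt_pow₀ hq' (show k - i ≠ 0 by omega)
    exact sub_ne_zero.mpr this.ne'
  field_simp

theorem gauss_pos (q m k : ℕ) (hq : 2 ≤ q) (hk : k ≤ m) : 0 < GaussQ q m k := by
  have hq' : (1 : ℚ) < q := by exact_mod_cast hq
  unfold GaussQ
  refine Finset.prod_pos fun i hi => ?_
  have hi := Finset.mem_range.mp hi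
  have h1 := one_lt_pow₀ hq' (show k - i ≠ 0 by omega)
  have h2 := one_lt_pow₀ hq' (show m - i ≠ 0 by omega)
  exact div_pos (by linarith) (by linarith)

theorem gauss_le (q t k : ℕ) (hq : 2 ≤ q) : GaussQ q (t + k) k ≤ (q : ℚ) ^ ((t + 1) * k) := by
  have hq' : (2 : ℚ) ≤ q := by exact_mod_cast hq
  induction k with
  | zero => simp [GaussQ]
  | succ k ih =>
    have h := gauss_R1 q (t + k) k hq
    have h1 := one_lt_pow₀ (show (1 : ℚ) < q by linarith) (Nat.succ_ne_zero k)
    have h3 : (q : ℚ) ^ (t + k + 1) - 1 ≤ (q : ℚ) ^ (t + 1) * ((q : ℚ) ^ (k + 1) - 1) := by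
      have e1 : (q : ℚ) ^ (t + k + 1) = q ^ (t + 1) * q ^ k := by ring
      have e2 : (q : ℚ) ^ (k + 1) = q * q ^ k := by ring
      have h4 : (1 : ℚ) ≤ q ^ k := one_le_pow₀ (by linarith)
      have h5 : (1 : ℚ) ≤ q ^ (t + 1) := one_le_pow₀ (by linarith)
      rw [e1, e2]
      have : (q : ℚ) ^ k * 2 ≤ q * q ^ k := by nlinarith
      nlinarith
    have h6 : 0 < (q : ℚ) ^ (k + 1) - 1 := sub_pos.mpr h1
    have h7 := gauss_pos q (t + k) k hq (by omega)
    refine le_of_mul_le_mul_right ?_ h6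
    calc GaussQ q (t + (k + 1)) (k + 1) * ((q : ℚ) ^ (k + 1) - 1)
        = ((q : ℚ) ^ (t + k + 1) - 1) * GaussQ q (t + k) k := h
      _ ≤ ((q : ℚ) ^ (t + 1) * ((q : ℚ) ^ (k + 1) - 1)) * (q : ℚ) ^ ((t + 1) * k) := by
          apply mul_le_mul h3 ih h7.le
          positivity
      _ = _ := by ring

theorem gauss_hyper (q k : ℕ) (hq : 2 ≤ q) :
    GaussQ q (k + 1) k * ((q : ℚ) - 1) = (q : ℚ) ^ (k + 1) - 1 := by
  have hq' : (2 : ℚ) ≤ q := by exact_mod_cast hq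
  induction k with
  | zero => simp [GaussQ]
  | succ k ih =>
    have h := gauss_R1 q (k + 1) k hq
    have h1 := one_lt_pow₀ (show (1 : ℚ) < q by linarith) (Nat.succ_ne_zero k)
    have h6 : (q : ℚ) ^ (k + 1) - 1 ≠ 0 := by
      apply ne_of_gt
      simpa using h1
    apply mul_right_cancel₀ h6
    linear_combination ((q : ℚ) - 1) * h + ((q : ℚ) ^ (k + 1 + 1) - 1) * ih

end Gauss

section Count

variable {K V : Type*} [Field K] [Fintype K] [AddCommGroup V] [Module K V]

/-- independent tuples correspond to a subspace with an independent tuple in it -/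
theorem tuple_bij (k : ℕ) [FiniteDimensional K V] :
    Function.Bijective (fun x : (Σ T : {T : Submodule K V // Module.finrank K T = k},
      {s : Fin k → T.1 // LinearIndependent K s}) =>
      (⟨fun i => ((x.2.1 i : x.1.1) : V), x.2.2.map' x.1.1.subtype (Submodule.ker_subtype _)⟩ :
        {s : Fin k → V // LinearIndependent K s})) := by
  have key : ∀ (T : Submodule K V) (hT : Module.finrank K T = k) (s : Fin k → T)
      (hs : LinearIndependent K s), Submodule.span K (Set.range fun i => (s i : V)) = T := by
    intro T hT s hs
    apply Submodule.eq_of_le_of_finrank_eq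
    · rw [Submodule.span_le]
      rintro _ ⟨i, rfl⟩
      exact (s i).2
    · have := finrank_span_eq_card (hs.map' T.subtype (Submodule.ker_subtype _))
      rw [hT]
      rw [Fintype.card_fin] at this
      exact this
  constructor
  · rintro ⟨⟨T, hT⟩, ⟨s, hs⟩⟩ ⟨⟨T', hT'⟩, ⟨s', hs'⟩⟩ h
    replace h : (fun i => (s i : V)) = fun i => (s' i : V) := congrArg Subtype.val h
    have h1 := key T hT s hs
    have h2 := key T' hT' s' hs'
    have : T = T' := by rw [← h1, ← h2, h]
    subst this
    have : s = s' := by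
      funext i
      exact Subtype.ext (congrFun h i)
    subst this
    rfl
  · rintro ⟨s, hs⟩
    refine ⟨⟨⟨Submodule.span K (Set.range s), by simpa using finrank_span_eq_card hs⟩,
      ⟨fun i => ⟨s i, Submodule.subset_span ⟨i, rfl⟩⟩, linearIndependent_span hs⟩⟩, rfl⟩

theorem card_sub [FiniteDimensional K V] (k : ℕ) (hk : k ≤ Module.finrank K V) :
    (Nat.card {T : Submodule K V // Module.finrank K T = k} : ℚ) =
      GaussQ (Fintype.card K) (Module.finrank K V) k := by
  classical
  have : Finite V := Module.finite_of_finite K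
  have : Fintype {T : Submodule K V // Module.finrank K T = k} := Fintype.ofFinite _
  set q := Fintype.card K with hqdef
  have hq : 2 ≤ q := Fintype.one_lt_card
  have hq' : (1 : ℚ) < q := by exact_mod_cast hq
  set n := Module.finrank K V
  have h1 := Nat.card_congr (Equiv.ofBijective _ (tuple_bij (K := K) (V := V) k))
  rw [card_linearIndependent hk, Nat.card_sigma] at h1
  have h2 : ∀ T : {T : Submodule K V // Module.finrank K T = k},
      Nat.card {s : Fin k → T.1 // LinearIndependent K s} = ∏ i : Fin k, (q ^ k - q ^ i.val) := by
    intro T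
    rw [card_linearIndependent T.2.ge, T.2]
  simp only [h2] at h1
  rw [Finset.sum_const, Finset.card_univ, ← Nat.card_eq_fintype_card, smul_eq_mul,
    Fin.prod_univ_eq_prod_range (fun i => q ^ k - q ^ i),
    Fin.prod_univ_eq_prod_range (fun i => q ^ Module.finrank K V - q ^ i)] at h1
  have h3 : ∀ m, k ≤ m → ((∏ i ∈ Finset.range k, (q ^ m - q ^ i) : ℕ) : ℚ) =
      (∏ i ∈ Finset.range k, (q : ℚ) ^ i) * ∏ i ∈ Finset.range k, ((q : ℚ) ^ (m - i) - 1) := by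
    intro m hm
    rw [← Finset.prod_mul_distrib]
    push_cast
    refine Finset.prod_congr rfl fun i hi => ?_
    have hi := Finset.mem_range.mp hi
    rw [Nat.cast_sub (Nat.pow_le_pow_right (by omega) (by omega)), mul_sub, ← pow_add]
    push_cast
    rw [show i + (m - i) = m by omega, mul_one]
  have h4 := congrArg (Nat.cast : ℕ → ℚ) h1
  rw [Nat.cast_mul, h3 k le_rfl, h3 _ hk] at h4
  have h5 : ∏ i ∈ Finset.range k, (q : ℚ) ^ i ≠ 0 :=
    Finset.prod_ne_zero_iff.mpr fun i _ => pow_ne_zero _ (by linarith)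
  have h6 : ∏ i ∈ Finset.range k, ((q : ℚ) ^ (k - i) - 1) ≠ 0 := by
    refine Finset.prod_ne_zero_iff.mpr fun i hi => ?_
    have hi := Finset.mem_range.mp hi
    have := one_lt_pow₀ hq' (show k - i ≠ 0 by omega)
    exact sub_ne_zero.mpr this.ne'
  unfold GaussQ
  rw [Finset.prod_div_distrib, eq_div_iff h6]
  apply mul_left_cancel₀ h5
  rw [← h4]
  ring

/-- the number of `k`-subspaces inside a given subspace -/
theorem card_sub_le [FiniteDimensional K V] (W : Submodule K V) (k : ℕ)
    (hk : k ≤ Module.finrank K W) :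
    (Nat.card {T : Submodule K V // T ≤ W ∧ Module.finrank K T = k} : ℚ) =
      GaussQ (Fintype.card K) (Module.finrank K W) k := by
  rw [← card_sub (V := W) k hk]
  congr 1
  symm
  refine Nat.card_congr (Equiv.ofBijective (fun T => ⟨T.1.map W.subtype,
    Submodule.map_subtype_le _ _, (Submodule.finrank_map_subtype_eq _ _).trans T.2⟩) ?_)
  constructor
  · rintro ⟨T, hT⟩ ⟨T', hT'⟩ h
    simp only [Subtype.mk.injEq] at h
    exact Subtype.ext (Submodule.map_injective_of_injective W.injective_subtype h)
  · rintro ⟨T, hT, hk⟩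
    refine ⟨⟨T.comap W.subtype, ?_⟩, ?_⟩
    · rw [← hk]
      exact (Submodule.comapSubtypeEquivOfLe hT).finrank_eq
    · apply Subtype.ext
      simpa [Submodule.map_comap_subtype] using hT

end Count

section EKR

variable {K E : Type*} [Field K] [Fintype K] [AddCommGroup E] [Module K E]

theorem exists_ext (K : Type*) [Field K] [Fintype K] (t : ℕ) (ht : 1 ≤ t) :
    ∃ (L : Type) (_ : Field L) (_ : Fintype L) (_ : Algebra K L), Module.finrank K L = t ∧
      Module.Finite K L ∧ Fintype.card L = Fintype.card K ^ t := by
  obtain ⟨p, hp⟩ := CharP.exists K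
  have hpp : Fact p.Prime := ⟨CharP.char_is_prime K p⟩
  have : NeZero t := ⟨by omega⟩
  have hf : Finite (FiniteField.Extension K p t) := Module.finite_of_finite K
  refine ⟨FiniteField.Extension K p t, inferInstance, Fintype.ofFinite _, inferInstance,
    FiniteField.finrank_extension K p t, inferInstance, ?_⟩
  have := FiniteField.natCard_extension K p t
  rw [Nat.card_eq_fintype_card (α := K)] at this
  rw [← this]
  exact (@Nat.card_eq_fintype_card _ (Fintype.ofFinite _)).symm

theorem exists_spread [FiniteDimensional K E] (t : ℕ) (ht : 1 ≤ t)
    (hE : Module.finrank K E = 2 * t) :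
    ∃ (ι : Type) (_ : Fintype ι) (S : ι → Submodule K E),
      Fintype.card ι = Fintype.card K ^ t + 1 ∧ (∀ i, Module.finrank K (S i) = t) ∧
      ∀ i j, i ≠ j → S i ⊔ S j = ⊤ := by
  classical
  obtain ⟨L, _, _, _, hL, _, hc⟩ := exists_ext K t ht
  have e : (L × L) ≃ₗ[K] E := LinearEquiv.ofFinrankEq _ _ (by
    rw [Module.finrank_prod, hL, hE]; ring)
  let f : Option L → (L →ₗ[K] L × L) := fun o => match o with
    | none => LinearMap.inr K L L
    | some a => LinearMap.id.prod (LinearMap.mulLeft K a)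
  have hf : ∀ o, Function.Injective (f o) := by
    intro o x y h
    cases o with
    | none => exact (Prod.ext_iff.mp h).2
    | some a => exact (Prod.ext_iff.mp h).1
  have hsome : ∀ a x, f (some a) x = (x, a * x) := fun a x => rfl
  have hnone : ∀ x, f none x = (0, x) := fun x => rfl
  have hn : ∀ a : L, LinearMap.range (f none) ⊔ LinearMap.range (f (some a)) = ⊤ := by
    intro a
    rw [eq_top_iff]
    rintro ⟨x, y⟩ -
    refine Submodule.mem_sup.mpr ⟨_, ⟨y - a * x, rfl⟩, _, ⟨x, rfl⟩, ?_⟩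
    rw [hsome, hnone]
    simp
  have hsup : ∀ i j, i ≠ j → LinearMap.range (f i) ⊔ LinearMap.range (f j) = ⊤ := by
    intro i j hij
    cases i with
    | none =>
      cases j with
      | none => exact absurd rfl hij
      | some a => exact hn a
    | some a =>
      cases j with
      | none => rw [sup_comm]; exact hn a
      | some b =>
        have hab : a - b ≠ 0 := by
          intro h
          apply hij
          rw [sub_eq_zero.mp h]
        rw [eq_top_iff]
        rintro ⟨x, y⟩ -
        refine Submodule.mem_sup.mpr ⟨_, ⟨(y - b * x) / (a - b), rfl⟩, _,
          ⟨x - (y - b * x) / (a - b), rfl⟩, ?_⟩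
        rw [hsome, hsome]
        ext
        · simp
        · simp only [Prod.mk_add_mk]
          field_simp
          ring
  refine ⟨Option L, inferInstance, fun o => (LinearMap.range (f o)).map (e : (L × L) →ₗ[K] E),
    ?_, ?_, ?_⟩
  · rw [Fintype.card_option, hc]
  · intro i
    rw [LinearEquiv.finrank_map_eq, LinearMap.finrank_range_of_inj (hf i), hL]
  · intro i j hij
    rw [← Submodule.map_sup, hsup i j hij, Submodule.map_top, LinearEquiv.range]

theorem ekr [FiniteDimensional K E] (t : ℕ) (ht : 1 ≤ t)
    (hE : Module.finrank K E = 2 * t) (N : Set (Submodule K E))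
    (hN : ∀ A ∈ N, Module.finrank K A = t) (hI : ∀ A ∈ N, ∀ B ∈ N, A ⊔ B ≠ ⊤) :
    N.ncard * (Fintype.card K ^ t + 1) ≤ Nat.card {T : Submodule K E // Module.finrank K T = t} := by
  classical
  have : Finite E := Module.finite_of_finite K
  have : Fintype (Submodule K E) := Fintype.ofFinite _
  have : Finite (E ≃ₗ[K] E) := Finite.of_injective (fun g => (g : E → E)) DFunLike.coe_injective
  have : Fintype (E ≃ₗ[K] E) := Fintype.ofFinite _
  obtain ⟨ι, _, S, hι, hS, hsup⟩ := exists_spread (K := K) (E := E) t ht hE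
  let act : (E ≃ₗ[K] E) → Submodule K E → Submodule K E := fun g A => A.map (g : E →ₗ[K] E)
  have hact : ∀ g A, Module.finrank K (act g A) = Module.finrank K A := fun g A =>
    LinearEquiv.finrank_map_eq g A
  let X : Finset (Submodule K E) := Finset.univ.filter fun T => Module.finrank K T = t
  let N' : Finset (Submodule K E) := Finset.univ.filter fun T => T ∈ N
  have hNX : N' ⊆ X := by
    intro A hA
    simp only [N', X, Finset.mem_filter, Finset.mem_univ, true_and] at hA ⊢
    exact hN A hA
  have hX : Nat.card {T : Submodule K E // Module.finrank K T = t} = X.card := by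
    rw [Nat.card_eq_fintype_card, Fintype.card_subtype]
  have hN' : N.ncard = N'.card := by
    rw [← Set.ncard_coe_finset]
    congr 1
    ext; simp [N']
  -- fibres have constant size
  have hfib : ∀ A : Submodule K E, Module.finrank K A = t → ∀ T ∈ X,
      (Finset.univ.filter fun g => act g A = T).card =
        (Finset.univ.filter fun g => act g A = A).card := by
    intro A hA T hT
    simp only [X, Finset.mem_filter, Finset.mem_univ, true_and] at hT
    obtain ⟨h, hh⟩ := Submodule.exists_linearEquiv_restrict_eq
      (LinearEquiv.ofFinrankEq A T (hA.trans hT.symm))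
    have hAT : act h A = T := by
      apply Submodule.eq_of_le_of_finrank_eq
      · rintro _ ⟨x, hx, rfl⟩
        have := hh ⟨x, hx⟩
        simp only [LinearEquiv.coe_coe]
        rw [← this]
        exact Subtype.property _
      · rw [hact, hA, hT]
    have hcomp : ∀ g g' : E ≃ₗ[K] E, ∀ B, act (g.trans g') B = act g' (act g B) := by
      intro g g' B
      simp only [act]
      rw [← Submodule.map_comp]
      rfl
    symm
    refine Finset.card_bij (fun g _ => g.trans h) ?_ ?_ ?_
    · intro g hg
      simp only [Finset.mem_filter, Finset.mem_univ, true_and] at hg ⊢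
      rw [hcomp, hg, hAT]
    · intro g _ g' _ hgg
      ext x
      exact h.injective (LinearEquiv.congr_fun hgg x)
    · intro g hg
      simp only [Finset.mem_filter, Finset.mem_univ, true_and] at hg
      refine ⟨g.trans h.symm, ?_, ?_⟩
      · simp only [Finset.mem_filter, Finset.mem_univ, true_and]
        rw [hcomp, hg, ← hAT, ← hcomp]
        simp [act]
      · ext x
        simp
  have hcount : ∀ A : Submodule K E, Module.finrank K A = t → ∀ Y ⊆ X,
      (Finset.univ.filter fun g => act g A ∈ Y).card =
        Y.card * (Finset.univ.filter fun g => act g A = A).card := by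
    intro A hA Y hY
    rw [Finset.card_eq_sum_card_fiberwise (f := fun g => act g A) (t := Y)
      (fun g hg => by simpa using hg)]
    rw [← smul_eq_mul, ← Finset.sum_const]
    refine Finset.sum_congr rfl fun T hT => ?_
    rw [← hfib A hA T (hY hT), Finset.filter_filter]
    congr 1
    ext g
    simp only [Finset.mem_filter, Finset.mem_univ, true_and]
    constructor
    · exact fun h => h.2
    · exact fun h => ⟨h ▸ hT, h⟩
  have hall : ∀ A : Submodule K E, Module.finrank K A = t → Fintype.card (E ≃ₗ[K] E) =
        X.card * (Finset.univ.filter fun g => act g A = A).card := by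
    intro A hA
    rw [← hcount A hA X subset_rfl, ← Finset.card_univ]
    congr 1
    ext g
    simp [X, hact, hA]
  have hmain : ∑ i : ι, (Finset.univ.filter fun g => act g (S i) ∈ N').card ≤
      Fintype.card (E ≃ₗ[K] E) := by
    simp only [Finset.card_filter]
    rw [Finset.sum_comm, ← Finset.card_univ, Finset.card_eq_sum_ones]
    refine Finset.sum_le_sum fun g _ => ?_
    rw [← Finset.card_filter, Finset.card_le_one]
    intro i hi j hj
    by_contra hij
    simp only [N', Finset.mem_filter, Finset.mem_univ, true_and] at hi hj
    refine hI _ hi _ hj ?_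
    simp only [act]
    rw [← Submodule.map_sup, hsup i j hij, Submodule.map_top, LinearEquiv.range]
  have hpos : 0 < Fintype.card (E ≃ₗ[K] E) := Fintype.card_pos_iff.mpr ⟨LinearEquiv.refl K E⟩
  rw [hX, hN', ← hι]
  have h1 : X.card * ∑ i : ι, (Finset.univ.filter fun g => act g (S i) ∈ N').card =
      (N'.card * Fintype.card ι) * Fintype.card (E ≃ₗ[K] E) := by
    rw [Finset.mul_sum]
    have : ∀ i ∈ (Finset.univ : Finset ι),
        X.card * (Finset.univ.filter fun g => act g (S i) ∈ N').card =
        N'.card * Fintype.card (E ≃ₗ[K] E) := by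
      intro i _
      rw [hcount _ (hS i) N' hNX, hall _ (hS i)]
      ring
    rw [Finset.sum_congr rfl this, Finset.sum_const, Finset.card_univ]
    simp only [smul_eq_mul]
    ring
  have h2 := Nat.mul_le_mul_left X.card hmain
  rw [h1] at h2
  exact Nat.le_of_mul_le_mul_right h2 hpos

end EKR

section Local

variable {K V : Type*} [Field K] [Fintype K] [AddCommGroup V] [Module K V] [FiniteDimensional K V]

theorem exists_sub (W : Submodule K V) (k : ℕ) (hk : k ≤ Module.finrank K W) :
    ∃ T : Submodule K V, T ≤ W ∧ Module.finrank K T = k := by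
  have h := card_sub_le W k hk
  have h2 := gauss_pos (Fintype.card K) (Module.finrank K W) k Fintype.one_lt_card hk
  rw [← h] at h2
  have h3 : 0 < Nat.card {T : Submodule K V // T ≤ W ∧ Module.finrank K T = k} := by
    exact_mod_cast h2
  obtain ⟨⟨T, hT⟩⟩ := (Nat.card_pos_iff.mp h3).1
  exact ⟨T, hT⟩

/-- lower bound for the number of complements -/
theorem card_compl (W U : Submodule K V) (hWU : W ≤ U) (w s : ℕ) (hw : Module.finrank K W = w)
    (hU : Module.finrank K U = s + w) :
    Fintype.card K ^ (s * w) ≤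
      {S : Submodule K V | S ≤ U ∧ U ≤ W ⊔ S ∧ Module.finrank K S = s}.ncard := by
  have : Finite V := Module.finite_of_finite K
  obtain ⟨C', hC'⟩ := Submodule.exists_isCompl W
  set C := C' ⊓ U with hC
  have hd : Disjoint W C := hC'.disjoint.mono_right inf_le_left
  have hs : W ⊔ C = U := by
    rw [hC, ← sup_inf_assoc_of_le C' hWU, hC'.sup_eq_top, top_inf_eq]
  have hCr : Module.finrank K C = s := by
    have := Submodule.finrank_sup_add_finrank_inf_eq W C
    rw [hs, hd.eq_bot, finrank_bot, hU, hw] at this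
    omega
  have hcard : Nat.card (C →ₗ[K] W) = Fintype.card K ^ (s * w) := by
    rw [Module.natCard_eq_pow_finrank (K := K), Module.finrank_linearMap, hCr, hw,
      Nat.card_eq_fintype_card]
  rw [← hcard, ← Set.ncard_univ]
  let g : (C →ₗ[K] W) → (C →ₗ[K] V) := fun f => C.subtype + W.subtype ∘ₗ f
  have hg : ∀ f c, g f c = (c : V) + (f c : V) := fun f c => rfl
  have hkey : ∀ (c c' : C) (x x' : W), (c : V) + x = c' + x' → c = c' ∧ x = x' := by
    intro c c' x x' h
    have h1 : (c : V) - c' = x' - x := by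
      rw [sub_eq_sub_iff_add_eq_add, h]; abel
    have h2 : (c : V) - c' = 0 := by
      refine Submodule.disjoint_def.mp hd _ ?_ (C.sub_mem c.2 c'.2)
      rw [h1]
      exact W.sub_mem x'.2 x.2
    have h3 : (x' : V) - x = 0 := by rw [← h1, h2]
    exact ⟨Subtype.ext (sub_eq_zero.mp h2), Subtype.ext (sub_eq_zero.mp h3).symm⟩
  refine Set.ncard_le_ncard_of_injOn (fun f => LinearMap.range (g f)) ?_ ?_ (Set.toFinite _)
  · intro f _
    refine ⟨?_, ?_, ?_⟩
    · rintro _ ⟨c, rfl⟩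
      rw [hg]
      exact U.add_mem (inf_le_right (a := C') c.2) (hWU (f c).2)
    · rw [← hs]
      refine sup_le le_sup_left ?_
      intro c hc
      have : c = -((f ⟨c, hc⟩ : W) : V) + g f ⟨c, hc⟩ := by rw [hg]; simp
      rw [this]
      exact Submodule.add_mem_sup (W.neg_mem (f ⟨c, hc⟩).2) ⟨_, rfl⟩
    · rw [LinearMap.finrank_range_of_inj, hCr]
      intro c c' h
      exact (hkey _ _ _ _ h).1
  · intro f _ f' _ h
    ext c
    have h1 : g f c ∈ LinearMap.range (g f') := by
      rw [← (show LinearMap.range (g f) = LinearMap.range (g f') from h)]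
      exact ⟨c, rfl⟩
    obtain ⟨c', hc'⟩ := h1
    obtain ⟨h2, h3⟩ := hkey c' c _ _ hc'
    rw [h2] at h3
    rw [h3]

theorem cover_key (F : Set (Submodule K V)) (t : ℕ)
    (hdim : ∀ A ∈ F, Module.finrank K A = 2 * t) (hcf : IsCoverFree F)
    (F₀ F₁ F₂ T T' : Submodule K V) (h0 : F₀ ∈ F) (h1 : F₁ ∈ F) (h2 : F₂ ∈ F)
    (h01 : F₁ ≠ F₀) (h02 : F₂ ≠ F₀) (hT : T ≤ F₀) (hT' : T' ≤ F₀) (hT1 : T ≤ F₁) (hT2 : T' ≤ F₂)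
    (hc : F₀ ≤ T ⊔ T') : False := by
  apply hcf
  refine ⟨F₀, F₁, F₂, h0, h1, h2, h01.symm, h02.symm, ?_, ?_⟩
  · rintro rfl
    apply h01
    symm
    apply Submodule.eq_of_le_of_finrank_eq
    · exact hc.trans (sup_le hT1 hT2)
    · rw [hdim _ h0, hdim _ h1]
  · exact hc.trans (sup_le_sup (le_inf hT hT1) (le_inf hT' hT2))

theorem Nset_bound (F : Set (Submodule K V)) (t : ℕ) (ht : 1 ≤ t)
    (hdim : ∀ A ∈ F, Module.finrank K A = 2 * t) (hcf : IsCoverFree F)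
    (F₀ : Submodule K V) (h0 : F₀ ∈ F) :
    ((Nset F t F₀).ncard : ℚ) * ((Fintype.card K : ℚ) ^ t + 1) ≤ GaussQ (Fintype.card K) (2 * t) t := by
  have h := ekr (K := K) (E := F₀) t ht (hdim _ h0)
    {T | T.map F₀.subtype ∈ Nset F t F₀} ?_ ?_
  · have h3 : Nset F t F₀ = (fun T : Submodule K F₀ => T.map F₀.subtype) ''
        {T | T.map F₀.subtype ∈ Nset F t F₀} := by
      ext T
      constructor
      · intro hT
        refine ⟨T.comap F₀.subtype, ?_, ?_⟩
        · simpa [Submodule.map_comap_subtype, inf_eq_right.mpr hT.1] using hT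
        · simpa [Submodule.map_comap_subtype] using hT.1
      · rintro ⟨T', hT', rfl⟩
        exact hT'
    rw [h3, Set.ncard_image_of_injective _
      (Submodule.map_injective_of_injective F₀.injective_subtype), ← hdim _ h0,
      ← card_sub (K := K) (V := F₀) t (by rw [hdim _ h0]; omega)]
    exact_mod_cast h
  · intro A hA
    have := hA.2.1
    rwa [Submodule.finrank_map_subtype_eq] at this
  · intro A hA B hB hAB
    obtain ⟨F₁, hF₁, h1⟩ := Set.exists_ne_of_one_lt_ncard hA.2.2 F₀
    obtain ⟨F₂, hF₂, h2⟩ := Set.exists_ne_of_one_lt_ncard hB.2.2 F₀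
    refine cover_key F t hdim hcf F₀ F₁ F₂ _ _ h0 hF₁.1 hF₂.1 h1 h2 hA.1 hB.1 hF₁.2 hF₂.2 ?_
    rw [← Submodule.map_sup, hAB, Submodule.map_subtype_top]

theorem Mset_add_Nset (F : Set (Submodule K V)) (t : ℕ) 
    (hdim : ∀ A ∈ F, Module.finrank K A = 2 * t)
    (F₀ : Submodule K V) (h0 : F₀ ∈ F) :
    ((Mset F t F₀).ncard : ℚ) + ((Nset F t F₀).ncard : ℚ) = GaussQ (Fintype.card K) (2 * t) t := by
  have : Finite V := Module.finite_of_finite K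
  rw [← hdim _ h0, ← card_sub_le F₀ t (by rw [hdim _ h0]; omega), ← Nat.cast_add,
    ← Set.ncard_union_eq _ (Set.toFinite _) (Set.toFinite _)]
  · congr 2
    ext T
    have : T ≤ F₀ → 0 < {G ∈ F | T ≤ G}.ncard := fun h =>
      (Set.ncard_pos (Set.toFinite _)).mpr ⟨F₀, h0, h⟩
    simp only [Mset, Nset, Set.mem_union, Set.mem_ofPred_eq]
    constructor
    · rintro (h | h) <;> exact ⟨h.1, h.2.1⟩
    · intro h
      have := this h.1
      rcases Nat.lt_or_ge 1 {G ∈ F | T ≤ G}.ncard with h' | h'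
      · exact Or.inr ⟨h.1, h.2, h'⟩
      · exact Or.inl ⟨h.1, h.2, by omega⟩
  · rw [Set.disjoint_left]
    intro T h1 h2
    have := h1.2.2
    have := h2.2.2
    omega

theorem own_bound (F : Set (Submodule K V)) (s : ℕ)
    (hdim : ∀ A ∈ F, Module.finrank K A = 2 * (s + 1)) (hcf : IsCoverFree F)
    (F₀ F₁ : Submodule K V) (h0 : F₀ ∈ F) (h1 : F₁ ∈ F) (h01 : F₁ ≠ F₀)
    (hbig : s + 2 ≤ Module.finrank K (F₀ ⊓ F₁ : Submodule K V)) :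
    Fintype.card K ^ (s * (s + 2)) ≤
      {S : Submodule K V | S ≤ F₀ ∧ Module.finrank K S = s ∧ {G ∈ F | S ≤ G}.ncard = 1}.ncard := by
  have : Finite V := Module.finite_of_finite K
  obtain ⟨W, hW, hWr⟩ := exists_sub _ _ hbig
  refine (card_compl W F₀ (hW.trans inf_le_left) (s + 2) s hWr (by rw [hdim _ h0]; ring)).trans ?_
  refine Set.ncard_le_ncard ?_ (Set.toFinite _)
  rintro S ⟨hS, hc, hr⟩
  refine ⟨hS, hr, ?_⟩
  rw [Set.ncard_eq_one]
  refine ⟨F₀, ?_⟩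
  ext G
  simp only [Set.mem_ofPred_eq, Set.mem_singleton_iff]
  constructor
  · rintro ⟨hG, hSG⟩
    by_contra hne
    exact cover_key F _ hdim hcf F₀ F₁ G W S h0 h1 hG h01 hne (hW.trans inf_le_left) hS
      (hW.trans inf_le_right) hSG hc
  · rintro rfl
    exact ⟨h0, hS⟩

/-- partial spread bound -/
theorem spread_bound_s15 (t : ℕ) (A : Submodule K V) (hA : Module.finrank K A = t)
    (𝒢 : Finset (Submodule K V)) (h𝒢 : ∀ G ∈ 𝒢, A ≤ G ∧ Module.finrank K G = 2 * t)
    (hinter : ∀ G ∈ 𝒢, ∀ H ∈ 𝒢, G ≠ H → Module.finrank K (G ⊓ H : Submodule K V) ≤ t) :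
    𝒢.card * (Fintype.card K ^ (2 * t) - Fintype.card K ^ t) ≤
      Fintype.card K ^ Module.finrank K V - Fintype.card K ^ t := by
  classical
  have : Finite V := Module.finite_of_finite K
  have : Fintype V := Fintype.ofFinite _
  have hc : ∀ U : Submodule K V, (Finset.univ.filter fun v => v ∈ U).card =
      Fintype.card K ^ Module.finrank K U := by
    intro U
    rw [← Nat.card_eq_fintype_card (α := K), ← Module.natCard_eq_pow_finrank (V := U),
      ← Fintype.card_subtype, ← Nat.card_eq_fintype_card]
  have hdiff : ∀ U : Submodule K V, A ≤ U →
      (Finset.univ.filter fun v => v ∈ U ∧ v ∉ A).card =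
      Fintype.card K ^ Module.finrank K U - Fintype.card K ^ t := by
    intro U hU
    rw [← hc U, ← hA, ← hc A, ← Finset.card_sdiff_of_subset]
    · congr 1
      ext v
      simp
    · intro v
      simpa using fun h => hU h
  have h1 : (𝒢.biUnion fun G => Finset.univ.filter fun v => v ∈ G ∧ v ∉ A).card =
      𝒢.card * (Fintype.card K ^ (2 * t) - Fintype.card K ^ t) := by
    rw [Finset.card_biUnion]
    · rw [← smul_eq_mul, ← Finset.sum_const]
      refine Finset.sum_congr rfl fun G hG => ?_
      rw [hdiff G (h𝒢 G hG).1, (h𝒢 G hG).2]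
    · intro G hG H hH hne
      change Disjoint _ _
      rw [Finset.disjoint_left]
      intro v hv hv'
      simp only [Finset.mem_filter, Finset.mem_univ, true_and] at hv hv'
      apply hv.2
      have : A = G ⊓ H := by
        apply Submodule.eq_of_le_of_finrank_le (le_inf (h𝒢 G hG).1 (h𝒢 H hH).1)
        rw [hA]
        exact hinter G hG H hH hne
      rw [this]
      exact ⟨hv.1, hv'.1⟩
  rw [← h1]
  have h2 := hdiff ⊤ le_top
  rw [finrank_top] at h2
  rw [← h2]
  apply Finset.card_le_card
  intro v hv
  simp only [Finset.mem_biUnion, Finset.mem_filter, Finset.mem_univ, true_and] at hv ⊢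
  obtain ⟨G, hG, hv⟩ := hv
  exact ⟨Submodule.mem_top, hv.2⟩

end Local

section Global

variable {K V : Type*} [Field K] [Fintype K] [AddCommGroup V] [Module K V] [FiniteDimensional K V]

theorem zero_bound (F : Set (Submodule K V)) (s : ℕ)
    (hdim : ∀ A ∈ F, Module.finrank K A = 2 * (s + 1))
    (hn : 2 * (s + 1) + 1 ≤ Module.finrank K V) :
    {S : Submodule K V | Module.finrank K S = s ∧ {G ∈ F | S ≤ G}.ncard = 1}.ncard ≤
      {B : Submodule K V | Module.finrank K B = s + 1 ∧ {G ∈ F | B ≤ G}.ncard = 0}.ncard := by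
  classical
  have : Finite V := Module.finite_of_finite K
  have : Fintype V := Fintype.ofFinite _
  have : Fintype (Submodule K V) := Fintype.ofFinite _
  set q := Fintype.card K with hqdef
  have hq : 2 ≤ q := Fintype.one_lt_card
  have hc : ∀ U : Submodule K V, (Finset.univ.filter fun v => v ∈ U).card =
      q ^ Module.finrank K U := by
    intro U
    rw [hqdef, ← Nat.card_eq_fintype_card (α := K), ← Module.natCard_eq_pow_finrank (V := U),
      ← Fintype.card_subtype, ← Nat.card_eq_fintype_card]
  let P : Finset (Submodule K V) := Finset.univ.filter fun S =>
    Module.finrank K S = s ∧ {G ∈ F | S ≤ G}.ncard = 1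
  let Z : Finset (Submodule K V) := Finset.univ.filter fun S =>
    Module.finrank K S = s + 1 ∧ {G ∈ F | S ≤ G}.ncard = 0
  have hP : {S : Submodule K V | Module.finrank K S = s ∧ {G ∈ F | S ≤ G}.ncard = 1}.ncard
      = P.card := by
    rw [← Set.ncard_coe_finset]
    congr 1
    ext; simp [P]
  have hZ : {B : Submodule K V | Module.finrank K B = s + 1 ∧ {G ∈ F | B ≤ G}.ncard = 0}.ncard
      = Z.card := by
    rw [← Set.ncard_coe_finset]
    congr 1
    ext; simp [Z]
  rw [hP, hZ]
  let Q : Finset (Σ _ : Submodule K V, V) := P.sigma fun S =>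
    Finset.univ.filter fun v => ∀ G ∈ F, S ≤ G → v ∉ G
  have hQ : Q.card = P.card * (q ^ Module.finrank K V - q ^ (2 * (s + 1))) := by
    rw [Finset.card_sigma, ← smul_eq_mul, ← Finset.sum_const]
    refine Finset.sum_congr rfl fun S hS => ?_
    simp only [P, Finset.mem_filter, Finset.mem_univ, true_and] at hS
    obtain ⟨G₀, hG₀⟩ := Set.ncard_eq_one.mp hS.2
    have hmem : ∀ G, (G ∈ F ∧ S ≤ G) ↔ G = G₀ := fun G => by
      have := Set.ext_iff.mp hG₀ G
      simpa using this
    have hG0 := (hmem G₀).mpr rfl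
    have h1 := hc ⊤
    rw [finrank_top] at h1
    rw [← h1, ← hdim _ hG0.1, ← hc G₀, ← Finset.card_sdiff_of_subset]
    · congr 1
      ext v
      simp only [Finset.mem_filter, Finset.mem_univ, true_and, Finset.mem_sdiff, Submodule.mem_top]
      constructor
      · intro h
        exact h G₀ hG0.1 hG0.2
      · intro h G hG hSG
        rw [(hmem G).mp ⟨hG, hSG⟩]
        exact h
    · intro v
      simp
  have hmaps : ∀ x ∈ Q, x.1 ⊔ Submodule.span K {x.2} ∈ Z := by
    rintro ⟨S, v⟩ hx
    simp only [Q, P, Z, Finset.mem_sigma, Finset.mem_filter, Finset.mem_univ, true_and] at hx ⊢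
    obtain ⟨⟨hS, h1⟩, hv⟩ := hx
    obtain ⟨G₀, hG₀⟩ := Set.ncard_eq_one.mp h1
    have hG0 : G₀ ∈ F ∧ S ≤ G₀ := by
      have := Set.ext_iff.mp hG₀ G₀
      simpa using this
    constructor
    · rw [Submodule.finrank_sup_span_singleton, hS]
      intro hvS
      exact hv G₀ hG0.1 hG0.2 (hG0.2 hvS)
    · rw [Set.ncard_eq_zero (Set.toFinite _)]
      ext G
      simp only [Set.mem_ofPred_eq, Set.mem_empty_iff_false, iff_false]
      rintro ⟨hG, hle⟩
      exact hv G hG (le_sup_left.trans hle)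
        (hle (Submodule.mem_sup_right (Submodule.mem_span_singleton_self v)))
  have hfib : ∀ B ∈ Z, (Q.filter fun x => x.1 ⊔ Submodule.span K {x.2} = B).card ≤
      q ^ (s + 1) * q ^ (s + 1) := by
    intro B hB
    simp only [Z, Finset.mem_filter, Finset.mem_univ, true_and] at hB
    have hB1 : (Finset.univ.filter fun S : Submodule K V => S ≤ B ∧ Module.finrank K S = s).card ≤
        q ^ (s + 1) := by
      have h1 := card_sub_le B s (by omega)
      have h2 := gauss_hyper q s hq
      rw [hB.1, ← hqdef] at h1
      rw [← h1, Nat.card_eq_fintype_card, Fintype.card_subtype] at h2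
      have hq' : (2 : ℚ) ≤ q := by exact_mod_cast hq
      have : ((Finset.univ.filter fun S : Submodule K V =>
          S ≤ B ∧ Module.finrank K S = s).card : ℚ) ≤ (q : ℚ) ^ (s + 1) := by
        have h0 : (0 : ℚ) ≤ ((Finset.univ.filter fun S : Submodule K V =>
          S ≤ B ∧ Module.finrank K S = s).card : ℚ) := Nat.cast_nonneg _
        nlinarith
      exact_mod_cast this
    calc _ ≤ ((Finset.univ.filter fun S : Submodule K V => S ≤ B ∧ Module.finrank K S = s).sigma
          fun _ => Finset.univ.filter fun v => v ∈ B).card := by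
          apply Finset.card_le_card
          rintro ⟨S, v⟩ hx
          simp only [Q, P, Finset.mem_sigma, Finset.mem_filter, Finset.mem_univ, true_and] at hx ⊢
          obtain ⟨⟨⟨hS, _⟩, _⟩, rfl⟩ := hx
          exact ⟨⟨le_sup_left, hS⟩,
            Submodule.mem_sup_right (Submodule.mem_span_singleton_self v)⟩
      _ ≤ _ := by
          rw [Finset.card_sigma, Finset.sum_const, hc, hB.1, smul_eq_mul]
          exact Nat.mul_le_mul_right _ hB1
  have h := Finset.card_le_mul_card_image_of_maps_to hmaps _ hfib
  rw [hQ, ← pow_add, show s + 1 + (s + 1) = 2 * (s + 1) by ring] at h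
  have h2 : 2 * q ^ (2 * (s + 1)) ≤ q ^ Module.finrank K V := by
    calc 2 * q ^ (2 * (s + 1)) ≤ q * q ^ (2 * (s + 1)) := Nat.mul_le_mul_right _ hq
      _ = q ^ (2 * (s + 1) + 1) := by ring
      _ ≤ _ := Nat.pow_le_pow_right (by omega) hn
  have h3 : P.card * q ^ (2 * (s + 1)) ≤ q ^ (2 * (s + 1)) * Z.card :=
    le_trans (Nat.mul_le_mul_left _ (by omega)) h
  rw [mul_comm] at h3
  exact Nat.le_of_mul_le_mul_left h3 (by positivity)

end Global

theorem stmt15 (q n t : ℕ) (K : Type*) [Field K] [Fintype K] (hK : Fintype.card K = q)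
    (V : Type*) [AddCommGroup V] [Module K V] [FiniteDimensional K V]
    (hV : Module.finrank K V = n) (ht : 1 ≤ t) (hn : 2 * t + 1 ≤ n)
    (F : Set (Submodule K V)) (hdim : ∀ A ∈ F, Module.finrank K A = 2 * t)
    (hcf : IsCoverFree F)
    (hcard : (F.ncard : ℚ) = GaussQ q (n - 1) t / GaussQ q (2 * t - 1) t) :
    (∀ F₀ ∈ F, ((Mset F t F₀).ncard : ℚ) = (q : ℚ) ^ t * GaussQ q (2 * t - 1) t ∧
      ((Nset F t F₀).ncard : ℚ) = GaussQ q (2 * t - 1) (t - 1)) ∧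
    (({A : Submodule K V | Module.finrank K A = t ∧ {G ∈ F | A ≤ G}.ncard = 1}.ncard : ℚ) =
      (q : ℚ) ^ t * GaussQ q (n - 1) t) ∧
    (({A : Submodule K V | Module.finrank K A = t ∧
        ({G ∈ F | A ≤ G}.ncard : ℚ) = ((q : ℚ) ^ (n - t) - 1) / ((q : ℚ) ^ t - 1)}.ncard : ℚ) =
      GaussQ q (n - 1) (t - 1)) := by
  classical
  subst hK hV
  obtain ⟨s, rfl⟩ : ∃ s, t = s + 1 := ⟨t - 1, by omega⟩
  have : Finite V := Module.finite_of_finite K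
  have : Fintype (Submodule K V) := Fintype.ofFinite _
  obtain ⟨n', hn'⟩ : ∃ n', Module.finrank K V = n' + 1 := ⟨Module.finrank K V - 1, by omega⟩
  set q := Fintype.card K with hqdef
  have hq : 2 ≤ q := Fintype.one_lt_card
  have hq' : (2 : ℚ) ≤ q := by exact_mod_cast hq
  set b := GaussQ q (2 * s + 1) s with hb
  set c := GaussQ q n' s with hcdef
  set m : ℚ := ((q : ℚ) ^ (Module.finrank K V - (s + 1)) - 1) / ((q : ℚ) ^ (s + 1) - 1) with hm
  have hqs : (0 : ℚ) < (q : ℚ) ^ (s + 1) - 1 :=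
    sub_pos.mpr (one_lt_pow₀ (by linarith) (Nat.succ_ne_zero s))
  have hmq : m * ((q : ℚ) ^ (s + 1) - 1) = (q : ℚ) ^ (Module.finrank K V - (s + 1)) - 1 := by
    rw [hm, div_mul_cancel₀ _ hqs.ne']
  have hm1 : 1 < m := by
    rw [hm, lt_div_iff₀ hqs, one_mul]
    have : (q : ℚ) ^ (s + 1) < (q : ℚ) ^ (Module.finrank K V - (s + 1)) :=
      pow_lt_pow_right₀ (by linarith) (by omega)
    linarith
  have hbpos : 0 < b := gauss_pos q _ _ hq (by omega)
  have hcpos : 0 < c := gauss_pos q _ _ hq (by omega)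
  -- Gaussian identities
  have g1 : GaussQ q (2 * s + 1) (s + 1) = b := by
    have := gauss_R2 q (2 * s + 1) s hq
    rw [show 2 * s + 1 - s = s + 1 by omega, mul_comm] at this
    exact mul_left_cancel₀ hqs.ne' this
  have g2 : GaussQ q (2 * (s + 1)) (s + 1) = ((q : ℚ) ^ (s + 1) + 1) * b := by
    have := gauss_R1 q (2 * s + 1) s hq
    rw [show 2 * s + 1 + 1 = 2 * (s + 1) by ring] at this
    apply mul_right_cancel₀ hqs.ne'
    rw [this, pow_mul']
    ring
  have g3 : GaussQ q n' (s + 1) = m * c := by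
    have := gauss_R2 q n' s hq
    apply mul_right_cancel₀ hqs.ne'
    rw [this, show n' - s = Module.finrank K V - (s + 1) by omega, ← hmq]
    ring
  have g4 : GaussQ q (n' + 1) (s + 1) = (q : ℚ) ^ (s + 1) * (m * c) + c := by
    have := gauss_R1 q n' s hq
    apply mul_right_cancel₀ hqs.ne'
    rw [this]
    have e : (q : ℚ) ^ (n' + 1) = q ^ (s + 1) * (m * ((q : ℚ) ^ (s + 1) - 1) + 1) := by
      rw [hmq, sub_add_cancel, ← pow_add]
      congr 1
      omega
    rw [e]
    ring
  have g5 : b ≤ (q : ℚ) ^ (s * (s + 2)) := by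
    have := gauss_le q (s + 1) s hq
    rw [show s + 1 + s = 2 * s + 1 by ring, show (s + 1 + 1) * s = s * (s + 2) by ring] at this
    exact this
  -- simplify the goal
  rw [show Module.finrank K V - 1 = n' by omega, show 2 * (s + 1) - 1 = 2 * s + 1 by omega,
    g1, g3] at hcard
  rw [show Module.finrank K V - 1 = n' by omega, show 2 * (s + 1) - 1 = 2 * s + 1 by omega,
    g1, g3, Nat.add_sub_cancel]
  -- finsets
  let Fs : Finset (Submodule K V) := Finset.univ.filter fun G => G ∈ F
  have hFs : ∀ G, G ∈ Fs ↔ G ∈ F := fun G => by simp [Fs]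
  have hncF : F.ncard = Fs.card := by
    rw [← Set.ncard_coe_finset]; congr 1; ext; simp [Fs]
  let x : Submodule K V → ℕ := fun A => {G ∈ F | A ≤ G}.ncard
  have hx : ∀ A, x A = (Fs.filter fun G => A ≤ G).card := by
    intro A
    change {G ∈ F | A ≤ G}.ncard = _
    rw [← Set.ncard_coe_finset]
    congr 1; ext; simp [Fs]
  have hnc : ∀ p : Submodule K V → Prop, {A | p A}.ncard = (Finset.univ.filter p).card := by
    intro p
    rw [← Set.ncard_coe_finset]; congr 1; ext; simp
  let 𝒜 : Finset (Submodule K V) := Finset.univ.filter fun A => Module.finrank K A = s + 1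
  let Om : Finset (Submodule K V) := Finset.univ.filter fun A => Module.finrank K A = s + 1 ∧ x A = 1
  let Z : Finset (Submodule K V) := Finset.univ.filter fun A => Module.finrank K A = s + 1 ∧ x A = 0
  let D : Finset (Submodule K V) := Finset.univ.filter fun A => Module.finrank K A = s + 1 ∧ 1 < x A
  let good : Submodule K V → Prop := fun G =>
    ∀ H ∈ F, H ≠ G → Module.finrank K (G ⊓ H : Submodule K V) ≤ s + 1
  let G1 := Fs.filter good
  let G0 := Fs.filter fun G => ¬ good G
  have hG01 : (G1.card : ℚ) + G0.card = Fs.card := by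
    exact_mod_cast Finset.card_filter_add_card_filter_not (s := Fs) good
  have hA : (𝒜.card : ℚ) = (q : ℚ) ^ (s + 1) * (m * c) + c := by
    rw [← g4, ← hn', ← card_sub (K := K) (V := V) (s + 1) (by omega), Nat.card_eq_fintype_card,
      Fintype.card_subtype]
  have hsplit : (𝒜.card : ℚ) = Om.card + Z.card + D.card := by
    have h1 : 𝒜 = (Om ∪ Z) ∪ D := by
      ext A
      simp only [𝒜, Om, Z, D, Finset.mem_union, Finset.mem_filter, Finset.mem_univ, true_and]
      constructor
      · intro h
        have : x A = 1 ∨ x A = 0 ∨ 1 < x A := by omega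
        tauto
      · tauto
    have h2 : Disjoint Om Z := by
      rw [Finset.disjoint_left]
      intro A h1 h2
      simp only [Om, Z, Finset.mem_filter, Finset.mem_univ, true_and] at h1 h2
      omega
    have h3 : Disjoint (Om ∪ Z) D := by
      rw [Finset.disjoint_left]
      intro A h1 h2
      simp only [Om, Z, D, Finset.mem_union, Finset.mem_filter, Finset.mem_univ, true_and] at h1 h2
      omega
    rw [h1, Finset.card_union_of_disjoint h3, Finset.card_union_of_disjoint h2]
    push_cast
    ring
  let M : Submodule K V → ℚ := fun G => (Mset F (s + 1) G).ncard
  let N : Submodule K V → ℚ := fun G => (Nset F (s + 1) G).ncard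
  have hMN : ∀ G ∈ Fs, M G + N G = ((q : ℚ) ^ (s + 1) + 1) * b := by
    intro G hG
    rw [← g2]
    exact Mset_add_Nset F (s + 1) hdim G ((hFs G).mp hG)
  have hNb : ∀ G ∈ Fs, 0 ≤ b - N G := by
    intro G hG
    have := Nset_bound F (s + 1) ht hdim hcf G ((hFs G).mp hG)
    rw [← hqdef, g2, mul_comm] at this
    have := le_of_mul_le_mul_left this (by positivity)
    exact sub_nonneg.mpr this
  have hdc : ∀ S T : Finset (Submodule K V), ∑ A ∈ S, (T.filter fun G => A ≤ G).card =
      ∑ G ∈ T, (S.filter fun A => A ≤ G).card := fun S T =>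
    Finset.sum_card_bipartiteAbove_eq_sum_card_bipartiteBelow (fun A G => A ≤ G)
  have hM' : ∀ G, M G = ((Om.filter fun A => A ≤ G).card : ℚ) := by
    intro G
    simp only [M, Mset]
    rw [hnc]
    congr 2
    ext A
    simp only [Om, x, Finset.mem_filter, Finset.mem_univ, true_and]
    tauto
  have hN' : ∀ G, N G = ((D.filter fun A => A ≤ G).card : ℚ) := by
    intro G
    simp only [N, Nset]
    rw [hnc]
    congr 2
    ext A
    simp only [D, x, Finset.mem_filter, Finset.mem_univ, true_and]
    tauto
  have hOm : (Om.card : ℚ) = ∑ G ∈ Fs, M G := by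
    have h1 := hdc Om Fs
    have h2 : ∑ A ∈ Om, (Fs.filter fun G => A ≤ G).card = Om.card := by
      rw [Finset.card_eq_sum_ones]
      refine Finset.sum_congr rfl fun A hA => ?_
      simp only [Om, Finset.mem_filter, Finset.mem_univ, true_and] at hA
      rw [← hx, hA.2]
    rw [h2] at h1
    rw [h1]
    push_cast
    exact Finset.sum_congr rfl fun G _ => (hM' G).symm
  have hZ : (G0.card : ℚ) * b ≤ Z.card := by
    have h1 := zero_bound F s hdim hn
    let P : Finset (Submodule K V) := Finset.univ.filter fun A => Module.finrank K A = s ∧ x A = 1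
    rw [hnc, hnc] at h1
    replace h1 : P.card ≤ Z.card := by
      refine le_trans (le_of_eq ?_) (h1.trans (le_of_eq ?_))
      · congr 1
        ext A
        simp only [P, x, Finset.mem_filter, Finset.mem_univ, true_and]
      · congr 1
        ext A
        simp only [Z, x, Finset.mem_filter, Finset.mem_univ, true_and]
    have h2 := hdc P G0
    have h3 : ∑ A ∈ P, (G0.filter fun G => A ≤ G).card ≤ P.card := by
      rw [Finset.card_eq_sum_ones]
      refine Finset.sum_le_sum fun A hA => ?_
      simp only [P, Finset.mem_filter, Finset.mem_univ, true_and] at hA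
      rw [← hA.2, hx]
      exact Finset.card_le_card (Finset.filter_subset_filter _ (Finset.filter_subset _ _))
    have h4 : G0.card * q ^ (s * (s + 2)) ≤ ∑ G ∈ G0, (P.filter fun A => A ≤ G).card := by
      rw [← smul_eq_mul, ← Finset.sum_const]
      refine Finset.sum_le_sum fun G hG => ?_
      simp only [G0, good, Finset.mem_filter, hFs] at hG
      obtain ⟨hG, hbad⟩ := hG
      push Not at hbad
      obtain ⟨H, hH, hne, hlt⟩ := hbad
      have := own_bound F s hdim hcf G H hG hH hne hlt
      rw [hnc] at this
      refine this.trans (le_of_eq ?_)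
      congr 1
      ext A
      simp only [P, x, Finset.mem_filter, Finset.mem_univ, true_and]
      tauto
    have h5 : G0.card * q ^ (s * (s + 2)) ≤ Z.card := by omega
    have h6 : (G0.card : ℚ) * (q : ℚ) ^ (s * (s + 2)) ≤ Z.card := by exact_mod_cast h5
    exact le_trans (mul_le_mul_of_nonneg_left g5 (Nat.cast_nonneg _)) h6
  have hy : ∀ A ∈ D, ((G1.filter fun G => A ≤ G).card : ℚ) ≤ m := by
    intro A hA
    simp only [D, Finset.mem_filter, Finset.mem_univ, true_and] at hA
    have h1 := spread_bound_s15 (s + 1) A hA.1 (G1.filter fun G => A ≤ G) ?_ ?_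
    · rw [← hqdef] at h1
      have h2 : ((G1.filter fun G => A ≤ G).card : ℚ) * ((q : ℚ) ^ (2 * (s + 1)) - (q : ℚ) ^ (s + 1)) ≤
          (q : ℚ) ^ Module.finrank K V - (q : ℚ) ^ (s + 1) := by
        have e1 : q ^ (s + 1) ≤ q ^ (2 * (s + 1)) := Nat.pow_le_pow_right (by omega) (by omega)
        have e2 : q ^ (s + 1) ≤ q ^ Module.finrank K V := Nat.pow_le_pow_right (by omega) (by omega)
        have h3 : ((_ : ℕ) : ℚ) ≤ ((_ : ℕ) : ℚ) := Nat.cast_le.mpr h1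
        rw [Nat.cast_mul, Nat.cast_sub e1, Nat.cast_sub e2] at h3
        push_cast at h3
        exact h3
      have e3 : (q : ℚ) ^ Module.finrank K V =
          q ^ (s + 1) * (m * ((q : ℚ) ^ (s + 1) - 1) + 1) := by
        rw [hmq, sub_add_cancel, ← pow_add]
        congr 1
        omega
      have e4 : (0 : ℚ) < (q : ℚ) ^ (s + 1) * ((q : ℚ) ^ (s + 1) - 1) := by positivity
      refine le_of_mul_le_mul_right ?_ e4
      rw [e3, pow_mul'] at h2
      linarith
    · intro G hG
      simp only [G1, Finset.mem_filter, hFs] at hG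
      exact ⟨hG.2, hdim _ hG.1.1⟩
    · intro G hG H hH hne
      simp only [G1, Finset.mem_filter, hFs] at hG hH
      exact hG.1.2 H hH.1.1 hne.symm
  have hD : ∑ A ∈ D, ((G1.filter fun G => A ≤ G).card : ℚ) = ∑ G ∈ G1, N G := by
    have h1 := hdc D G1
    have h2 : ((∑ A ∈ D, (G1.filter fun G => A ≤ G).card : ℕ) : ℚ) =
      ((∑ G ∈ G1, (D.filter fun A => A ≤ G).card : ℕ) : ℚ) := by rw [h1]
    push_cast at h2
    rw [h2]
    exact Finset.sum_congr rfl fun G _ => (hN' G).symm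
  have hD1 : ∑ G ∈ G1, N G ≤ D.card * m := by
    rw [← hD, ← nsmul_eq_mul]
    exact Finset.sum_le_card_nsmul _ _ _ hy
  -- deficiency
  set δ := ∑ G ∈ Fs, (b - N G) with hδ
  have hδ0 : 0 ≤ δ := Finset.sum_nonneg hNb
  have hδ1 : ∑ G ∈ G1, (b - N G) ≤ δ :=
    Finset.sum_le_sum_of_subset_of_nonneg (Finset.filter_subset _ _) fun G hG _ => hNb G hG
  rw [Finset.sum_sub_distrib, Finset.sum_const, nsmul_eq_mul] at hδ1
  have hFb : (Fs.card : ℚ) * b = m * c := by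
    rw [← hncF, hcard]
    field_simp
  have hOm2 : (Om.card : ℚ) = (q : ℚ) ^ (s + 1) * (m * c) + δ := by
    rw [hOm, hδ, ← hFb]
    have : ∀ G ∈ Fs, M G = (q : ℚ) ^ (s + 1) * b + (b - N G) := fun G hG => by
      linarith [hMN G hG]
    rw [Finset.sum_congr rfl this, Finset.sum_add_distrib, Finset.sum_const, nsmul_eq_mul]
    ring
  have hG0nn : (0 : ℚ) ≤ G0.card := Nat.cast_nonneg _
  have htot : c = δ + Z.card + D.card := by linarith
  have hcrit : (m - 1) * (δ + G0.card * b) ≤ 0 := by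
    have h1 : m * c = m * δ + m * Z.card + m * D.card := by rw [htot]; ring
    have h2 : m * (G0.card * b) ≤ m * Z.card := mul_le_mul_of_nonneg_left hZ (by linarith)
    have h3 : m * c = G1.card * b + G0.card * b := by rw [← hFb, ← hG01]; ring
    linarith
  have hzero : δ + G0.card * b ≤ 0 := by
    by_contra h
    push Not at h
    have := mul_pos (sub_pos.mpr hm1) h
    linarith
  have hG0b : 0 ≤ (G0.card : ℚ) * b := by positivity
  have hδz : δ = 0 := by linarith
  have hG0z : G0.card = 0 := by
    have : (G0.card : ℚ) * b = 0 := by linarith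
    rcases mul_eq_zero.mp this with h | h
    · exact_mod_cast h
    · exact absurd h hbpos.ne'
  have hNeq : ∀ G ∈ Fs, N G = b := fun G hG => by
    have := (Finset.sum_eq_zero_iff_of_nonneg hNb).mp hδz G hG
    linarith
  have hG1 : G1 = Fs := by
    apply Finset.filter_true_of_mem
    intro G hG
    by_contra hbad
    have : G ∈ G0 := Finset.mem_filter.mpr ⟨hG, hbad⟩
    rw [Finset.card_eq_zero.mp hG0z] at this
    exact absurd this (Finset.notMem_empty G)
  have hDsum : ∑ G ∈ G1, N G = m * c := by
    rw [hG1, Finset.sum_congr rfl hNeq, Finset.sum_const, nsmul_eq_mul, hFb]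
  have hDc : (D.card : ℚ) = c := by
    have h1 : (0 : ℚ) ≤ Z.card := Nat.cast_nonneg _
    have h2 : c ≤ D.card := by
      rw [hDsum, mul_comm] at hD1
      exact le_of_mul_le_mul_right hD1 (by linarith)
    linarith
  have hxm : ∀ A ∈ D, (x A : ℚ) = m := by
    have h1 : ∑ A ∈ D, (m - ((G1.filter fun G => A ≤ G).card : ℚ)) = 0 := by
      rw [Finset.sum_sub_distrib, hD, hDsum, Finset.sum_const, nsmul_eq_mul, hDc]
      ring
    intro A hA
    have h2 := (Finset.sum_eq_zero_iff_of_nonneg fun A hA => sub_nonneg.mpr (hy A hA)).mp h1 A hA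
    rw [hx, ← hG1]
    linarith
  refine ⟨?_, ?_, ?_⟩
  · intro G hG
    have hG' := (hFs G).mpr hG
    have h1 := hNeq G hG'
    have h2 := hMN G hG'
    refine ⟨?_, h1⟩
    change M G = _
    linarith
  · have h : (Om.card : ℚ) = (q : ℚ) ^ (s + 1) * (m * c) := by rw [hOm2, hδz, add_zero]
    rw [hnc, ← h]
    congr 2
    ext A
    simp only [Om, x, Finset.mem_filter, Finset.mem_univ, true_and]
  · rw [hnc, ← hcdef, ← hDc]
    congr 2
    ext A
    simp only [D, Finset.mem_filter, Finset.mem_univ, true_and]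
    constructor
    · rintro ⟨h1, h2⟩
      refine ⟨h1, ?_⟩
      have h3 : (1 : ℚ) < (x A : ℚ) := by
        change (x A : ℚ) = m at h2
        rw [h2]
        exact hm1
      exact_mod_cast h3
    · rintro ⟨h1, h2⟩
      exact ⟨h1, hxm A (Finset.mem_filter.mpr ⟨Finset.mem_univ _, h1, h2⟩)⟩
end
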